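/- Let K be a cubic number field (a number field of degree 3 over ℚ) with ring of integers 𝓞. For n ∈ ℕ, let bₙ(K) denote the number of subrings of 𝓞 of additive index n which contain 1, and let j_K(n) denote the number of nonzero ideals of 𝓞 of absolute norm n. Then for every real s > 1 the following identity of convergent series holds: (∑_{n≥1} bₙ(K)·n^{−s})·(∑_{n≥1} j_K(n)·n^{−2s}) = (∑_{n≥1} j_K(n)·n^{−s})·(∑_{n≥1} n^{−2s})·(∑_{n≥1} n^{1−3s}). Equivalently, η_K(s) = (ζ_K(s)/ζ_K(2s))·ζ(2s)·ζ(3s−1). -/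

import Mathlib

open scoped NumberField

/-- `bₙ(K)`: the number of subrings (unital, containing `1`) of the ring of integers of `K`
of additive index `n`. -/
noncomputable def orderCount (K : Type*) [Field K] [NumberField K] (n : ℕ) : ℕ :=
  Nat.card {S : Subring (𝓞 K) // S.toAddSubgroup.index = n}

/-- `j_K(n)`: the number of nonzero ideals of the ring of integers of `K` of absolute
norm `n`. -/
noncomputable def idealCount (K : Type*) [Field K] [NumberField K] (n : ℕ) : ℕ :=
  Nat.card {I : Ideal (𝓞 K) // I ≠ ⊥ ∧ Ideal.absNorm I = n}

/-!
All the series are Dirichlet series of multiplicative functions, so for `A = 𝓞 K` it suffices to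
prove `B(X) J(X²) (1 - X²) (1 - p X³) = J(X)`, where `B = ∑ b (p ^ k) X ^ k` and
`J = ∑ j (p ^ k) X ^ k` are the Bell series at a prime `p`.

Subrings of `A` correspond to subgroups `M` of `A / ℤ`, a free abelian group of rank two, that are
closed under multiplication modulo `ℤ`. If `M ≤ p (A / ℤ)` then `M = p N` with `N` closed under
`p` times the product only, and iterating the division by `p` gives
`b (p ^ (k + 3)) = p b (p ^ k) + c (p ^ (k + 3)) + 1`, where `c` counts the primitive subrings,
those with `M` not contained in `p (A / ℤ)`. The quotient by a primitive subring of index `p ^ k`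
is cyclic, so the subring is `ℤ + C` for its conductor `C`, of norm `p ^ (2 k)`; the ideals
`p ^ k / C` are those with cyclic quotient of order `p ^ k`. These are the `k`-th powers of the
primes of norm `p`, which must be unramified if `k ≥ 2`. Inspecting the splitting types of `p`
then gives `B(X) (1 - X²) (1 - p X³) = ∏ (1 + X ^ f)`, over the residue degrees `f` of the primes
above `p`, whereas `J(X) / J(X²) = ∏ (1 - X ^ (2 f)) / (1 - X ^ f)`, which is the same product.
-/

/-! ### Subgroups of index a power of `p` in a free abelian group of rank two -/

section Lattice

open Module
open scoped Pointwise

lemma addSubgroup_eq_of_le_of_index_eq {G : Type*} [AddGroup G] {M N : AddSubgroup G} (h : M ≤ N)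
    (hi : M.index = N.index) (h0 : N.index ≠ 0) : M = N := by
  have : M.FiniteIndex := ⟨hi ▸ h0⟩
  by_contra hne
  exact (AddSubgroup.index_strictAnti (lt_of_le_of_ne h hne)).ne' hi

variable {L : Type*} [AddCommGroup L]

/-- The subgroup `{x | n • x ∈ M}`, usually written `M : n`. -/
def nsmulColon (n : ℕ) (M : AddSubgroup L) : AddSubgroup L :=
  M.comap (nsmulAddMonoidHom n)

lemma mem_nsmulColon {n : ℕ} {M : AddSubgroup L} {x : L} : x ∈ nsmulColon n M ↔ n • x ∈ M :=
  Iff.rfl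

lemma le_nsmulColon (n : ℕ) (M : AddSubgroup L) : M ≤ nsmulColon n M :=
  fun _ hx => M.nsmul_mem hx n

lemma mem_nsmul {n : ℕ} {M : AddSubgroup L} {x : L} : x ∈ n • M ↔ ∃ y ∈ M, n • y = x :=
  AddSubgroup.mem_smul_pointwise_iff_exists _ _ _

lemma nsmul_mono (n : ℕ) : Monotone (n • · : AddSubgroup L → AddSubgroup L) :=
  fun _ _ h => AddSubgroup.map_mono h

lemma nsmul_top_eq_range (n : ℕ) : n • (⊤ : AddSubgroup L) = (nsmulAddMonoidHom n).range :=
  (AddMonoidHom.range_eq_map _).symm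

lemma nsmul_nsmulColon {n : ℕ} {M : AddSubgroup L} (h : M ≤ n • ⊤) : n • nsmulColon n M = M := by
  rw [nsmul_top_eq_range] at h
  exact (AddSubgroup.map_comap_eq _ _).trans (inf_eq_right.mpr h)

lemma nsmul_top_le_of_index_eq {n : ℕ} {M : AddSubgroup L} (h : M.index = n) : n • ⊤ ≤ M := by
  rintro _ ⟨y, -, rfl⟩
  exact h ▸ AddSubgroup.nsmul_index_mem M y

lemma nsmul_mem_of_relIndex_eq {n : ℕ} {M N : AddSubgroup L} (h : M.relIndex N = n) {x : L}
    (hx : x ∈ N) : n • x ∈ M :=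
  h ▸ AddSubgroup.nsmul_index_mem (M.addSubgroupOf N) ⟨x, hx⟩

/-- Nakayama's lemma for finite `n`-groups. -/
lemma eq_top_of_sup_nsmul_top_eq_top {n b : ℕ} {M : AddSubgroup L} (hM : M.index = n ^ b)
    (h : M ⊔ n • ⊤ = ⊤) : M = ⊤ := by
  have key (k : ℕ) : M ⊔ n ^ k • ⊤ = ⊤ := by
    induction k with
    | zero => simp
    | succ k ih =>
      have hle : n ^ k • M ≤ M := by
        rintro _ ⟨y, hy, rfl⟩
        exact M.nsmul_mem hy _
      have hsup : n ^ k • (⊤ : AddSubgroup L) = n ^ k • M ⊔ n ^ (k + 1) • ⊤ := calc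
        n ^ k • ⊤ = n ^ k • (M ⊔ n • ⊤) := by rw [h]
        _ = n ^ k • M ⊔ n ^ k • n • ⊤ := AddSubgroup.map_sup _ _ _
        _ = n ^ k • M ⊔ n ^ (k + 1) • ⊤ := by rw [pow_succ, mul_smul]
      rwa [hsup, ← sup_assoc, sup_eq_left.mpr hle] at ih
  have hle : n ^ b • ⊤ ≤ M := nsmul_top_le_of_index_eq hM
  exact (sup_eq_left.mpr hle).symm.trans (key b)

lemma natCard_addSubgroup_index_eq_prime_of_zmodModule {V : Type*} [AddCommGroup V] {p : ℕ}
    [Fact p.Prime] [Module (ZMod p) V] (hV : Nat.card V = p ^ 2) :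
    Nat.card {N : AddSubgroup V // N.index = p} = p + 1 := by
  have hp : p.Prime := Fact.out
  have : Finite V := Nat.finite_of_card_ne_zero (hV ▸ pow_ne_zero _ hp.ne_zero)
  have hrank : finrank (ZMod p) V = 2 :=
    Nat.pow_right_injective hp.two_le ((FiniteField.pow_finrank_eq_natCard p V).trans hV)
  have hlines := Projectivization.card_of_finrank_two (ZMod p) V hrank
  rw [Nat.card_zmod, Nat.card_congr (Projectivization.equivSubmodule (ZMod p) V)] at hlines
  rw [← hlines]
  refine Nat.card_congr ((AddSubgroup.toZModSubmodule p).toEquiv.subtypeEquiv fun N => ?_)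
  change N.index = p ↔ finrank (ZMod p) (AddSubgroup.toZModSubmodule p N) = 1
  have hcard : p ^ finrank (ZMod p) (AddSubgroup.toZModSubmodule p N) * N.index = p ^ 2 :=
    (congrArg (· * N.index) (FiniteField.pow_finrank_eq_natCard p _)).trans
      (N.card_mul_index.trans hV)
  constructor
  · intro h
    rw [h, ← pow_succ] at hcard
    exact Nat.succ_injective (Nat.pow_right_injective hp.two_le hcard)
  · intro h
    rw [h, pow_one, sq] at hcard
    exact Nat.eq_of_mul_eq_mul_left hp.pos hcard

variable [Free ℤ L] [Module.Finite ℤ L]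

lemma index_nsmul_top (n : ℕ) : (n • (⊤ : AddSubgroup L)).index = n ^ finrank ℤ L := by
  rw [nsmul_top_eq_range, AddSubgroup.index_range_nsmul]

lemma index_nsmul {n : ℕ} (hn : n ≠ 0) (M : AddSubgroup L) :
    (n • M).index = n ^ finrank ℤ L * M.index := by
  rw [mul_comm, ← AddSubgroup.index_range_nsmul]
  exact AddSubgroup.index_map_of_injective M
    (AddSubgroup.nsmulAddMonoidHom_injective_of_isTorsionFree hn)

lemma finite_setOf_addSubgroup_index_eq {n : ℕ} (hn : n ≠ 0) :
    {M : AddSubgroup L | M.index = n}.Finite := by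
  have : Finite (L ⧸ n • (⊤ : AddSubgroup L)) := by
    rw [← AddSubgroup.index_ne_zero_iff_finite, index_nsmul_top]
    exact pow_ne_zero _ hn
  have := Finite.of_equiv _ (QuotientAddGroup.comapMk'OrderIso (n • (⊤ : AddSubgroup L))).toEquiv
  exact (Set.finite_coe_iff.mp this).subset fun M hM => nsmul_top_le_of_index_eq hM

lemma natCard_addSubgroup_index_eq_prime (hL : finrank ℤ L = 2) {p : ℕ} (hp : p.Prime) :
    Nat.card {N : AddSubgroup L // N.index = p} = p + 1 := by
  have := Fact.mk hp
  let P : AddSubgroup L := p • ⊤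
  let V := L ⧸ P
  have hpV (v : V) : p • v = 0 := by
    obtain ⟨x, rfl⟩ := QuotientAddGroup.mk'_surjective P v
    rw [← map_nsmul, QuotientAddGroup.mk'_apply, QuotientAddGroup.eq_zero_iff]
    exact mem_nsmul.mpr ⟨x, trivial, rfl⟩
  let := AddCommGroup.zmodModule hpV
  have hV : Nat.card V = p ^ 2 := by rw [← hL]; exact index_nsmul_top p
  rw [← natCard_addSubgroup_index_eq_prime_of_zmodModule hV]
  calc Nat.card {N : AddSubgroup L // N.index = p}
      = Nat.card {N : {N : AddSubgroup L // P ≤ N} // N.1.index = p} :=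
        Nat.card_congr (Equiv.subtypeSubtypeEquivSubtype nsmul_top_le_of_index_eq).symm
    _ = Nat.card {N : AddSubgroup V // N.index = p} := by
        refine (Nat.card_congr
          ((QuotientAddGroup.comapMk'OrderIso P).toEquiv.subtypeEquiv fun N => ?_)).symm
        change _ ↔ (N.comap (QuotientAddGroup.mk' P)).index = p
        rw [AddSubgroup.index_comap_of_surjective _ (QuotientAddGroup.mk'_surjective P)]

lemma ncard_addSubgroup_relIndex_eq_prime (hL : finrank ℤ L = 2) {p : ℕ} (hp : p.Prime)
    {M : AddSubgroup L} (hM : M.index ≠ 0) :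
    {N : AddSubgroup L | N ≤ M ∧ N.relIndex M = p}.ncard = p + 1 := by
  have : M.FiniteIndex := ⟨hM⟩
  have : Free ℤ M := inferInstanceAs (Free ℤ (AddSubgroup.toIntSubmodule M))
  have : Module.Finite ℤ M := inferInstanceAs (Module.Finite ℤ (AddSubgroup.toIntSubmodule M))
  rw [← natCard_addSubgroup_index_eq_prime
    ((AddSubgroup.finrank_eq_of_finiteIndex M).trans hL) hp, ← Nat.card_coe_set_eq]
  refine Nat.card_congr
    { toFun := fun N => ⟨N.1.addSubgroupOf M, N.2.2⟩
      invFun := fun N => ⟨N.1.map M.subtype, AddSubgroup.map_subtype_le _, ?_⟩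
      left_inv := fun N => Subtype.ext (AddSubgroup.map_addSubgroupOf_eq_of_le N.2.1)
      right_inv := fun N => Subtype.ext
        (AddSubgroup.comap_map_eq_self_of_injective M.subtype_injective _) }
  change ((N.1.map M.subtype).comap M.subtype).index = p
  rw [AddSubgroup.comap_map_eq_self_of_injective M.subtype_injective, N.2]

/-- The subgroups of index `p ^ b` that are primitive at `p`: every subgroup of `p`-power index is
uniquely of the form `p ^ k • M` with `M` primitive. -/
structure IsPrimitive (p b : ℕ) (M : AddSubgroup L) : Prop where
  index_eq : M.index = p ^ b
  not_le : ¬ M ≤ p • ⊤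

namespace IsPrimitive

variable {p b : ℕ} {M : AddSubgroup L}

omit [Free ℤ L] [Module.Finite ℤ L] in
lemma ne_top (hp : p.Prime) (hM : IsPrimitive p (b + 1) M) : M ≠ ⊤ := by
  rintro rfl
  exact (Nat.one_lt_pow b.succ_ne_zero hp.one_lt).ne (AddSubgroup.index_top.symm.trans hM.index_eq)

lemma of_index_eq_of_lt (hp : p.Prime) (hM : M.index = p ^ b) (hb : b < finrank ℤ L) :
    IsPrimitive p b M := by
  refine ⟨hM, fun hle => ?_⟩
  have hdvd := AddSubgroup.index_dvd_of_le hle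
  rw [index_nsmul_top, hM, Nat.pow_dvd_pow_iff_le_right hp.one_lt] at hdvd
  exact absurd hdvd hb.not_ge

lemma index_sup_nsmul_top (hL : finrank ℤ L = 2) (hp : p.Prime) (hM : IsPrimitive p (b + 1) M) :
    (M ⊔ p • ⊤).index = p := by
  have hpL := index_nsmul_top (L := L) p
  rw [hL] at hpL
  have hdvd : (M ⊔ p • ⊤).index ∣ p ^ 2 := hpL ▸ AddSubgroup.index_dvd_of_le le_sup_right
  obtain ⟨k, hk, hindex⟩ := (Nat.dvd_prime_pow hp).mp hdvd
  interval_cases k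
  · rw [pow_zero, AddSubgroup.index_eq_one] at hindex
    exact absurd (eq_top_of_sup_nsmul_top_eq_top hM.index_eq hindex) (hM.ne_top hp)
  · rw [hindex, pow_one]
  · have heq : p • ⊤ = M ⊔ p • ⊤ := addSubgroup_eq_of_le_of_index_eq le_sup_right
      (hpL.trans hindex.symm) (hindex ▸ pow_ne_zero _ hp.ne_zero)
    exact absurd (heq ▸ le_sup_left) hM.not_le

lemma colon (hL : finrank ℤ L = 2) (hp : p.Prime) (hM : IsPrimitive p (b + 1) M) :
    IsPrimitive p b (nsmulColon p M) where
  index_eq := by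
    have hcolon : (nsmulColon p M).index = M.relIndex (p • ⊤) := by
      rw [nsmul_top_eq_range]; exact AddSubgroup.index_comap _ _
    have hsup := AddSubgroup.relIndex_mul_index (le_sup_left : M ≤ M ⊔ p • ⊤)
    rw [hM.index_sup_nsmul_top hL hp, AddSubgroup.relIndex_sup_left, hM.index_eq, pow_succ] at hsup
    rw [hcolon]
    exact Nat.eq_of_mul_eq_mul_right hp.pos hsup
  not_le hle := hM.not_le ((le_nsmulColon p M).trans hle)

lemma relIndex_nsmulColon (hL : finrank ℤ L = 2) (hp : p.Prime) (hM : IsPrimitive p (b + 1) M) :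
    M.relIndex (nsmulColon p M) = p := by
  have h := AddSubgroup.relIndex_mul_index (le_nsmulColon p M)
  rw [(hM.colon hL hp).index_eq, hM.index_eq, pow_succ'] at h
  exact Nat.eq_of_mul_eq_mul_right (pow_pos hp.pos b) h

lemma exists_pow_nsmul_notMem (hL : finrank ℤ L = 2) (hp : p.Prime)
    (hM : IsPrimitive p (b + 1) M) : ∃ x : L, p ^ b • x ∉ M := by
  induction b generalizing M with
  | zero => simpa using SetLike.exists_not_mem_of_ne_top M (hM.ne_top hp) rfl
  | succ b ih =>
    obtain ⟨x, hx⟩ := ih (hM.colon hL hp)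
    exact ⟨x, by rwa [mem_nsmulColon, ← mul_smul, ← pow_succ'] at hx⟩

/-- `L / M` is cyclic of order `p ^ (b + 1)`, hence its `p`-torsion is `p ^ b L / M`. -/
lemma exists_eq_add_of_mem_nsmulColon (hL : finrank ℤ L = 2) (hp : p.Prime)
    (hM : IsPrimitive p (b + 1) M) {x : L} (hx : x ∈ nsmulColon p M) :
    ∃ m ∈ M, ∃ y : L, x = m + p ^ b • y := by
  have hle : M ⊔ p ^ b • ⊤ ≤ nsmulColon p M := by
    refine sup_le (le_nsmulColon p M) ?_
    rintro _ ⟨y, -, rfl⟩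
    change p • p ^ b • y ∈ M
    rw [← mul_smul, ← pow_succ', ← hM.index_eq]
    exact AddSubgroup.nsmul_index_mem M y
  have hmul := AddSubgroup.relIndex_mul_relIndex M (M ⊔ p ^ b • ⊤) _ le_sup_left hle
  rw [hM.relIndex_nsmulColon hL hp] at hmul
  have hne : M.relIndex (M ⊔ p ^ b • ⊤) ≠ 1 := by
    obtain ⟨y, hy⟩ := hM.exists_pow_nsmul_notMem hL hp
    rw [Ne, AddSubgroup.relIndex_eq_one]
    exact fun hsup => hy (hsup (AddSubgroup.mem_sup_right (mem_nsmul.mpr ⟨y, trivial, rfl⟩)))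
  have hone : (M ⊔ p ^ b • ⊤).relIndex (nsmulColon p M) = 1 := by
    rw [((Nat.dvd_prime hp).mp ⟨_, hmul.symm⟩).resolve_left hne] at hmul
    exact Nat.eq_of_mul_eq_mul_left hp.pos (hmul.trans (mul_one p).symm)
  obtain ⟨m, hm, _, ⟨y, -, rfl⟩, rfl⟩ :=
    AddSubgroup.mem_sup.mp (AddSubgroup.relIndex_eq_one.mp hone hx)
  exact ⟨m, hm, y, rfl⟩

lemma nsmulColon_eq_iff (hL : finrank ℤ L = 2) (hp : p.Prime) {N : AddSubgroup L}
    (hN : IsPrimitive p b N) :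
    IsPrimitive p (b + 1) M ∧ nsmulColon p M = N ↔
      (M ≤ N ∧ M.relIndex N = p) ∧ ¬ M ≤ p • ⊤ := by
  constructor
  · rintro ⟨hM, rfl⟩
    exact ⟨⟨le_nsmulColon p M, hM.relIndex_nsmulColon hL hp⟩, hM.not_le⟩
  · rintro ⟨⟨hle, hrel⟩, hnot⟩
    have hmul := AddSubgroup.relIndex_mul_index hle
    rw [hrel, hN.index_eq, ← pow_succ'] at hmul
    have hM : IsPrimitive p (b + 1) M := ⟨hmul.symm, hnot⟩
    have hindex := (hM.colon hL hp).index_eq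
    refine ⟨hM, (addSubgroup_eq_of_le_of_index_eq (fun x hx => ?_)
      (hN.index_eq.trans hindex.symm) (hindex ▸ pow_ne_zero _ hp.ne_zero)).symm⟩
    exact nsmul_mem_of_relIndex_eq hrel hx

lemma ncard_setOf_nsmulColon_eq_of_zero (hL : finrank ℤ L = 2) (hp : p.Prime) {N : AddSubgroup L}
    (hN : IsPrimitive p 0 N) :
    {M : AddSubgroup L | IsPrimitive p 1 M ∧ nsmulColon p M = N}.ncard = p + 1 := by
  rw [← ncard_addSubgroup_relIndex_eq_prime hL hp (M := N) (by simp [hN.index_eq])]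
  congr 1
  ext M
  refine (hN.nsmulColon_eq_iff hL hp).trans (and_iff_left_of_imp fun ⟨hle, hrel⟩ => ?_)
  have hmul := AddSubgroup.relIndex_mul_index hle
  rw [hrel, hN.index_eq, ← pow_succ'] at hmul
  exact (of_index_eq_of_lt hp hmul.symm (by omega)).not_le

lemma ncard_setOf_nsmulColon_eq_of_succ (hL : finrank ℤ L = 2) (hp : p.Prime) {N : AddSubgroup L}
    (hN : IsPrimitive p (b + 1) N) :
    {M : AddSubgroup L | IsPrimitive p (b + 2) M ∧ nsmulColon p M = N}.ncard = p := by
  have hindex : N.index ≠ 0 := hN.index_eq ▸ pow_ne_zero _ hp.ne_zero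
  have hinf : (N ⊓ p • ⊤).relIndex N = p := by
    rw [AddSubgroup.inf_relIndex_left, ← AddSubgroup.relIndex_sup_right]
    have hmul := AddSubgroup.relIndex_mul_index (le_sup_right : p • ⊤ ≤ N ⊔ p • ⊤)
    rw [hN.index_sup_nsmul_top hL hp, index_nsmul_top, hL, sq] at hmul
    exact Nat.eq_of_mul_eq_mul_right hp.pos hmul
  have hfibre : {M : AddSubgroup L | IsPrimitive p (b + 2) M ∧ nsmulColon p M = N} =
      {M : AddSubgroup L | M ≤ N ∧ M.relIndex N = p} \ {N ⊓ p • ⊤} := by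
    ext M
    refine (hN.nsmulColon_eq_iff hL hp).trans (and_congr_right fun ⟨hle, hrel⟩ =>
      not_congr ⟨fun hM => ?_, fun hM => hM.le.trans inf_le_right⟩)
    have hmul := AddSubgroup.relIndex_mul_index hle
    have hmul' := AddSubgroup.relIndex_mul_index (inf_le_left : N ⊓ p • ⊤ ≤ N)
    rw [hrel] at hmul
    rw [hinf] at hmul'
    exact addSubgroup_eq_of_le_of_index_eq (le_inf hle hM) (hmul.symm.trans hmul')
      (hmul' ▸ mul_ne_zero hp.ne_zero hindex)
  have hmem : N ⊓ p • ⊤ ∈ {M : AddSubgroup L | M ≤ N ∧ M.relIndex N = p} := ⟨inf_le_left, hinf⟩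
  rw [hfibre, Set.ncard_sdiff_singleton_of_mem hmem,
    ncard_addSubgroup_relIndex_eq_prime hL hp hindex, Nat.add_sub_cancel]

end IsPrimitive

end Lattice
/-! ### Subrings as subgroups of `A / ℤ` -/

section ModInt

open Module
open scoped Pointwise

/-- The additive group `A / ℤ · 1`: subrings of `A` are determined by their image in it. -/
abbrev ModInt (A : Type*) [CommRing A] : Type _ := A ⧸ AddSubgroup.zmultiples (1 : A)

/-- The projection `A → A / ℤ`. -/
abbrev toModInt (A : Type*) [CommRing A] : A →+ ModInt A :=
  QuotientAddGroup.mk' (AddSubgroup.zmultiples (1 : A))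

variable {A : Type*} [CommRing A]

lemma toModInt_surjective : Function.Surjective (toModInt A) :=
  QuotientAddGroup.mk'_surjective _

lemma toModInt_eq_zero_iff {x : A} : toModInt A x = 0 ↔ ∃ n : ℤ, (n : A) = x := by
  rw [QuotientAddGroup.mk'_apply, QuotientAddGroup.eq_zero_iff, AddSubgroup.mem_zmultiples_iff]
  simp only [zsmul_one]

lemma toModInt_eq_iff {x y : A} : toModInt A x = toModInt A y ↔ ∃ n : ℤ, x = y + n := by
  rw [← sub_eq_zero, ← map_sub, toModInt_eq_zero_iff]
  exact exists_congr fun n => by rw [eq_comm, sub_eq_iff_eq_add']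

lemma toModInt_intCast (n : ℤ) : toModInt A (n : A) = 0 :=
  toModInt_eq_zero_iff.mpr ⟨n, rfl⟩

lemma toModInt_natCast_mul (n : ℕ) (x : A) : toModInt A ((n : A) * x) = n • toModInt A x := by
  rw [← nsmul_eq_mul, map_nsmul]

lemma toModInt_intCast_mul (n : ℤ) (x : A) : toModInt A ((n : A) * x) = n • toModInt A x := by
  rw [← zsmul_eq_mul, map_zsmul]

lemma toModInt_nsmul_top (n : ℕ) : (n • (⊤ : AddSubgroup A)).map (toModInt A) = n • ⊤ := by
  ext z
  constructor
  · rintro ⟨_, ⟨y, -, rfl⟩, rfl⟩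
    exact mem_nsmul.mpr ⟨toModInt A y, trivial, (map_nsmul _ _ _).symm⟩
  · rintro ⟨y, -, rfl⟩
    obtain ⟨y, rfl⟩ := toModInt_surjective y
    exact ⟨n • y, mem_nsmul.mpr ⟨y, trivial, rfl⟩, map_nsmul _ _ _⟩

section FreeModInt

variable [Nontrivial A] [Free ℤ A] [Module.Finite ℤ A]

lemma exists_intCast_eq_of_intCast_eq_mul {k n : ℤ} (hk : k ≠ 0) {x : A} (h : (n : A) = k * x) :
    ∃ m : ℤ, (m : A) = x := by
  have hnorm : n ^ finrank ℤ A = k ^ finrank ℤ A * Algebra.norm ℤ x := by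
    rw [← Algebra.norm_algebraMap, ← Algebra.norm_algebraMap, ← map_mul]
    exact congrArg (Algebra.norm ℤ) h
  obtain ⟨m, rfl⟩ := (Int.pow_dvd_pow_iff finrank_pos.ne').mp (Dvd.intro _ hnorm.symm)
  refine ⟨m, smul_right_injective A hk ?_⟩
  simpa only [zsmul_eq_mul, Int.cast_mul] using h

instance : IsTorsionFree ℤ (ModInt A) where
  isSMulRegular k hk := by
    rw [isSMulRegular_iff_right_eq_zero_of_smul]
    intro z hz
    obtain ⟨x, rfl⟩ := toModInt_surjective z
    rw [← toModInt_intCast_mul, toModInt_eq_zero_iff] at hz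
    obtain ⟨n, hn⟩ := hz
    exact toModInt_eq_zero_iff.mpr (exists_intCast_eq_of_intCast_eq_mul hk.ne_zero hn)

omit [Nontrivial A] [Free ℤ A] in
instance : Module.Finite ℤ (ModInt A) :=
  .of_surjective (toModInt A).toIntLinearMap toModInt_surjective

instance : Free ℤ (ModInt A) :=
  free_of_finite_type_torsion_free'

lemma finrank_modInt_add_one : finrank ℤ (ModInt A) + 1 = finrank ℤ A := by
  have hker : (toModInt A).toIntLinearMap.ker = ℤ ∙ (1 : A) := by
    ext x
    rw [LinearMap.mem_ker, Submodule.mem_span_singleton]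
    refine toModInt_eq_zero_iff.trans (exists_congr fun n => ?_)
    rw [zsmul_one]
  have hrank := (toModInt A).toIntLinearMap.ker.finrank_quotient_add_finrank
  rwa [((toModInt A).toIntLinearMap.quotKerEquivOfSurjective toModInt_surjective).finrank_eq, hker,
    ← (LinearEquiv.toSpanNonzeroSingleton ℤ A 1 one_ne_zero).finrank_eq, finrank_self] at hrank

end FreeModInt

/-- Closure of the subgroup of `A / ℤ` under `n` times the product of `A`: equivalently, the
preimage of `n • M` is a subring of `A` when `A / ℤ` is torsion-free. -/
def IsMulClosed (n : ℕ) (M : AddSubgroup (ModInt A)) : Prop :=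
  ∀ x y : A, toModInt A x ∈ M → toModInt A y ∈ M → toModInt A (n * (x * y)) ∈ M

lemma isMulClosed_top (n : ℕ) : IsMulClosed n (⊤ : AddSubgroup (ModInt A)) :=
  fun _ _ _ _ => trivial

lemma IsMulClosed.nsmul {n m : ℕ} {M : AddSubgroup (ModInt A)} (hM : IsMulClosed (n * m) M) :
    IsMulClosed n (m • M) := by
  rintro x y ⟨x', hx', hx⟩ ⟨y', hy', hy⟩
  obtain ⟨x', rfl⟩ := toModInt_surjective x'
  obtain ⟨y', rfl⟩ := toModInt_surjective y'
  obtain ⟨k, rfl⟩ := toModInt_eq_iff.mp (hx.symm.trans (toModInt_natCast_mul m x').symm)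
  obtain ⟨l, rfl⟩ := toModInt_eq_iff.mp (hy.symm.trans (toModInt_natCast_mul m y').symm)
  have hexpand : (n : A) * ((m * x' + k) * (m * y' + l)) =
      m * ((n * m : ℕ) * (x' * y') + (n * l : ℤ) * x' + (n * k : ℤ) * y') +
        (n * k * l : ℤ) := by
    push_cast
    ring
  rw [hexpand, map_add, toModInt_intCast, add_zero, toModInt_natCast_mul]
  refine ⟨_, ?_, rfl⟩
  rw [map_add, map_add, toModInt_intCast_mul, toModInt_intCast_mul]
  exact M.add_mem (M.add_mem (hM _ _ hx' hy') (M.zsmul_mem hx' _)) (M.zsmul_mem hy' _)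

lemma isMulClosed_nsmul_iff [IsTorsionFree ℤ (ModInt A)] {n m : ℕ} (hm : m ≠ 0)
    {M : AddSubgroup (ModInt A)} : IsMulClosed n (m • M) ↔ IsMulClosed (n * m) M := by
  refine ⟨fun hM x y hx hy => ?_, IsMulClosed.nsmul⟩
  obtain ⟨z, hz, hz'⟩ := hM (m * x) (m * y) ⟨_, hx, (toModInt_natCast_mul m x).symm⟩
    ⟨_, hy, (toModInt_natCast_mul m y).symm⟩
  have hexpand : (n : A) * (m * x * (m * y)) = m * ((n * m : ℕ) * (x * y)) := by
    push_cast
    ring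
  rw [hexpand, toModInt_natCast_mul] at hz'
  rwa [← AddSubgroup.nsmulAddMonoidHom_injective_of_isTorsionFree hm hz']

lemma IsMulClosed.of_nsmulColon {n m : ℕ} {M : AddSubgroup (ModInt A)}
    (hM : IsMulClosed n (nsmulColon m M)) : IsMulClosed (n * m) M := by
  intro x y hx hy
  have h := hM x y (le_nsmulColon m M hx) (le_nsmulColon m M hy)
  rw [mem_nsmulColon, ← toModInt_natCast_mul, ← mul_assoc, ← Nat.cast_mul, mul_comm m] at h
  exact h

lemma IsPrimitive.isMulClosed_nsmulColon_iff [Free ℤ (ModInt A)] [Module.Finite ℤ (ModInt A)]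
    (hA : finrank ℤ (ModInt A) = 2) {p b n : ℕ} (hp : p.Prime) {M : AddSubgroup (ModInt A)}
    (hM : IsPrimitive p (b + 1) M) :
    IsMulClosed n (nsmulColon p M) ↔ IsMulClosed (n * p) M := by
  refine ⟨IsMulClosed.of_nsmulColon, fun hR x y hx hy => ?_⟩
  have exists_lift (x : A) (hx : toModInt A x ∈ nsmulColon p M) :
      ∃ m u : A, toModInt A m ∈ M ∧ x = m + (p ^ b : ℕ) * u := by
    obtain ⟨m, hm, u, hu⟩ := hM.exists_eq_add_of_mem_nsmulColon hA hp hx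
    obtain ⟨m, rfl⟩ := toModInt_surjective m
    obtain ⟨u, rfl⟩ := toModInt_surjective u
    rw [← toModInt_natCast_mul, ← map_add, toModInt_eq_iff] at hu
    obtain ⟨k, rfl⟩ := hu
    exact ⟨m + k, u, by rwa [map_add, toModInt_intCast, add_zero], by ring⟩
  obtain ⟨m, u, hm, rfl⟩ := exists_lift x hx
  obtain ⟨l, v, hl, rfl⟩ := exists_lift y hy
  have hexpand : (p : A) * (n * ((m + (p ^ b : ℕ) * u) * (l + (p ^ b : ℕ) * v))) =
      (n * p : ℕ) * (m * l) +
        (p ^ (b + 1) : ℕ) * (n * (u * l + v * m + p ^ b * (u * v))) := by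
    push_cast
    ring
  rw [mem_nsmulColon, ← toModInt_natCast_mul, hexpand, map_add,
    toModInt_natCast_mul (p ^ (b + 1)), ← hM.index_eq]
  exact M.add_mem (hR _ _ hm hl) (AddSubgroup.nsmul_index_mem M _)

section Subring

/-- The image in `A / ℤ` of a subring of `A`. -/
def subringImage (S : Subring A) : AddSubgroup (ModInt A) :=
  S.toAddSubgroup.map (toModInt A)

lemma toModInt_mem_subringImage {S : Subring A} {x : A} :
    toModInt A x ∈ subringImage S ↔ x ∈ S := by
  refine ⟨?_, fun hx => ⟨x, hx, rfl⟩⟩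
  rintro ⟨y, hy, hyx⟩
  obtain ⟨n, rfl⟩ := toModInt_eq_iff.mp hyx.symm
  exact S.add_mem hy (intCast_mem S n)

lemma index_subringImage (S : Subring A) : (subringImage S).index = S.toAddSubgroup.index := by
  refine AddSubgroup.index_map_eq _ toModInt_surjective fun x hx => ?_
  obtain ⟨n, rfl⟩ := toModInt_eq_zero_iff.mp hx
  exact intCast_mem S n

lemma isMulClosed_one_iff {M : AddSubgroup (ModInt A)} :
    IsMulClosed 1 M ↔ ∃ S : Subring A, subringImage S = M := by
  simp only [IsMulClosed, Nat.cast_one, one_mul]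
  constructor
  · intro hM
    have hone : toModInt A 1 ∈ M := by
      rw [toModInt_eq_zero_iff.mpr ⟨1, Int.cast_one⟩]
      exact M.zero_mem
    refine ⟨{ M.comap (toModInt A) with
      mul_mem' := fun {x y} => hM x y
      one_mem' := hone }, ?_⟩
    exact AddSubgroup.map_comap_eq_self_of_surjective toModInt_surjective M
  · rintro ⟨S, rfl⟩ x y hx hy
    rw [toModInt_mem_subringImage] at *
    exact S.mul_mem hx hy

lemma subringImage_injective : Function.Injective (subringImage : Subring A → _) := by
  intro S T hST
  ext x
  rw [← toModInt_mem_subringImage, hST, toModInt_mem_subringImage]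

lemma natCard_subring_index_eq (n : ℕ) :
    Nat.card {S : Subring A // S.toAddSubgroup.index = n} =
      {M : AddSubgroup (ModInt A) | M.index = n ∧ IsMulClosed 1 M}.ncard := by
  have himage : {M : AddSubgroup (ModInt A) | M.index = n ∧ IsMulClosed 1 M} =
      subringImage '' {S : Subring A | S.toAddSubgroup.index = n} := by
    ext M
    constructor
    · rintro ⟨hM, hclosed⟩
      obtain ⟨S, rfl⟩ := isMulClosed_one_iff.mp hclosed
      exact ⟨S, (index_subringImage S).symm.trans hM, rfl⟩
    · rintro ⟨S, hS, rfl⟩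
      exact ⟨(index_subringImage S).trans hS, isMulClosed_one_iff.mpr ⟨S, rfl⟩⟩
  rw [himage, Set.ncard_image_of_injective _ subringImage_injective]
  rfl

end Subring

end ModInt

section Count

lemma ncard_eq_mul_of_ncard_fiber_eq {α β : Type*} {s : Set α} {t : Set β} {f : α → β}
    (hs : s.Finite) (ht : t.Finite) (hf : Set.MapsTo f s t) {c : ℕ}
    (hc : ∀ y ∈ t, {x | x ∈ s ∧ f x = y}.ncard = c) : s.ncard = c * t.ncard := by
  classical
  lift s to Finset α using hs
  lift t to Finset β using ht
  rw [Set.ncard_coe_finset, Set.ncard_coe_finset, mul_comm, Finset.card_eq_sum_card_fiberwise hf]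
  refine Finset.sum_const_nat fun y hy => ?_
  rw [← hc y hy, ← Set.ncard_coe_finset, Finset.coe_filter]
  rfl

variable (A : Type*) [CommRing A]

/-- The number of subgroups of index `p ^ n` of `A / ℤ` closed under `m` times the product. -/
noncomputable def mulClosedCount (p m n : ℕ) : ℕ :=
  {M : AddSubgroup (ModInt A) | M.index = p ^ n ∧ IsMulClosed m M}.ncard

/-- The number of subgroups of index `p ^ n` of `A / ℤ` that are primitive at `p` and closed under
`m` times the product. -/
noncomputable def primitiveCount (p m n : ℕ) : ℕ :=
  {M : AddSubgroup (ModInt A) | IsPrimitive p n M ∧ IsMulClosed m M}.ncard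

variable {A} {p : ℕ}

open Module
open scoped Pointwise

lemma mulClosedCount_zero (m : ℕ) : mulClosedCount A p m 0 = 1 := by
  refine Set.ncard_eq_one.mpr ⟨⊤, ?_⟩
  ext M
  rw [Set.mem_ofPred_eq, pow_zero, AddSubgroup.index_eq_one, Set.mem_singleton_iff]
  exact and_iff_left_of_imp fun h => h ▸ isMulClosed_top m

variable [Free ℤ (ModInt A)] [Module.Finite ℤ (ModInt A)]

lemma finite_setOf_isPrimitive_and_isMulClosed (hp : p.Prime) (m n : ℕ) :
    {M : AddSubgroup (ModInt A) | IsPrimitive p n M ∧ IsMulClosed m M}.Finite :=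
  (finite_setOf_addSubgroup_index_eq (pow_ne_zero n hp.ne_zero)).subset fun _ hM => hM.1.index_eq

lemma mulClosedCount_eq_primitiveCount (hp : p.Prime) {m n : ℕ} (hn : n < finrank ℤ (ModInt A)) :
    mulClosedCount A p m n = primitiveCount A p m n := by
  refine congrArg Set.ncard (Set.ext fun M => and_congr_left fun _ => ?_)
  exact ⟨fun hM => .of_index_eq_of_lt hp hM hn, fun hM => hM.index_eq⟩

variable (hA : finrank ℤ (ModInt A) = 2)
include hA

/-- An imprimitive subgroup is `p • M`, where `M` need only be closed under `m * p` times the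
product. -/
lemma mulClosedCount_add_two (hp : p.Prime) (m n : ℕ) :
    mulClosedCount A p m (n + 2) = primitiveCount A p m (n + 2) + mulClosedCount A p (m * p) n := by
  have hindex (M : AddSubgroup (ModInt A)) : (p • M).index = p ^ 2 * M.index :=
    hA ▸ index_nsmul hp.ne_zero M
  have hunion : {M : AddSubgroup (ModInt A) | M.index = p ^ (n + 2) ∧ IsMulClosed m M} =
      {M | IsPrimitive p (n + 2) M ∧ IsMulClosed m M} ∪
        (p • ·) '' {M | M.index = p ^ n ∧ IsMulClosed (m * p) M} := by
    ext M
    constructor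
    · rintro ⟨hM, hclosed⟩
      by_cases hle : M ≤ p • ⊤
      · have hcolon : p • nsmulColon p M = M := nsmul_nsmulColon hle
        refine .inr ⟨nsmulColon p M, ⟨?_, ?_⟩, hcolon⟩
        · have h := hindex (nsmulColon p M)
          rw [hcolon, hM, pow_add, mul_comm] at h
          exact (Nat.eq_of_mul_eq_mul_left (pow_pos hp.pos 2) h).symm
        · rwa [← isMulClosed_nsmul_iff hp.ne_zero, hcolon]
      · exact .inl ⟨⟨hM, hle⟩, hclosed⟩
    · rintro (⟨hM, hclosed⟩ | ⟨N, ⟨hN, hclosed⟩, rfl⟩)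
      · exact ⟨hM.index_eq, hclosed⟩
      · exact ⟨by rw [hindex, hN]; ring, hclosed.nsmul⟩
  have hinj : Function.Injective (p • · : AddSubgroup (ModInt A) → AddSubgroup (ModInt A)) :=
    AddSubgroup.map_injective (AddSubgroup.nsmulAddMonoidHom_injective_of_isTorsionFree hp.ne_zero)
  have hfinite : {M : AddSubgroup (ModInt A) | M.index = p ^ n ∧ IsMulClosed (m * p) M}.Finite :=
    (finite_setOf_addSubgroup_index_eq (pow_ne_zero n hp.ne_zero)).subset fun _ hM => hM.1
  have hdisjoint : Disjoint {M : AddSubgroup (ModInt A) | IsPrimitive p (n + 2) M ∧ IsMulClosed m M}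
      ((p • ·) '' {M | M.index = p ^ n ∧ IsMulClosed (m * p) M}) := by
    rw [Set.disjoint_left]
    rintro _ ⟨hM, -⟩ ⟨N, -, rfl⟩
    exact hM.not_le (nsmul_mono p le_top)
  rw [mulClosedCount, hunion, Set.ncard_union_eq hdisjoint
    (finite_setOf_isPrimitive_and_isMulClosed hp _ _) (hfinite.image _),
    Set.ncard_image_of_injective _ hinj, primitiveCount, mulClosedCount]

lemma primitiveCount_mul_succ (hp : p.Prime) {c n : ℕ}
    (hc : ∀ N : AddSubgroup (ModInt A), IsPrimitive p n N →
      {M : AddSubgroup (ModInt A) | IsPrimitive p (n + 1) M ∧ nsmulColon p M = N}.ncard = c)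
    (m : ℕ) : primitiveCount A p (m * p) (n + 1) = c * primitiveCount A p m n := by
  refine ncard_eq_mul_of_ncard_fiber_eq (f := nsmulColon p)
    (finite_setOf_isPrimitive_and_isMulClosed hp _ _)
    (finite_setOf_isPrimitive_and_isMulClosed hp _ _) ?_ ?_
  · rintro M ⟨hM, hclosed⟩
    exact ⟨hM.colon hA hp, (hM.isMulClosed_nsmulColon_iff hA hp).mpr hclosed⟩
  · rintro N ⟨hN, hclosed⟩
    rw [← hc N hN]
    refine congrArg Set.ncard (Set.ext fun M => and_congr_left fun hMN => ?_)
    refine and_iff_left_of_imp fun hM => ?_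
    rwa [← hM.isMulClosed_nsmulColon_iff hA hp, hMN]

lemma primitiveCount_mul_one (hp : p.Prime) (m : ℕ) : primitiveCount A p (m * p) 1 = p + 1 := by
  rw [primitiveCount_mul_succ hA hp (n := 0) fun N hN => hN.ncard_setOf_nsmulColon_eq_of_zero hA hp,
    ← mulClosedCount_eq_primitiveCount hp (hA ▸ two_pos), mulClosedCount_zero, mul_one]

lemma primitiveCount_mul_add_two (hp : p.Prime) (m n : ℕ) :
    primitiveCount A p (m * p) (n + 2) = p * primitiveCount A p m (n + 1) :=
  primitiveCount_mul_succ hA hp (fun _ hN => hN.ncard_setOf_nsmulColon_eq_of_succ hA hp) m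

lemma mulClosedCount_mul_succ (hp : p.Prime) (m n : ℕ) :
    mulClosedCount A p (m * p) (n + 1) = p * mulClosedCount A p m n + 1 := by
  induction n using Nat.twoStepInduction generalizing m with
  | zero =>
    rw [mulClosedCount_eq_primitiveCount hp (hA ▸ one_lt_two), primitiveCount_mul_one hA hp,
      mulClosedCount_zero, mul_one]
  | one =>
    rw [mulClosedCount_add_two hA hp, mulClosedCount_zero, primitiveCount_mul_add_two hA hp,
      mulClosedCount_eq_primitiveCount hp (hA ▸ one_lt_two)]
  | more n ih _ =>
    rw [mulClosedCount_add_two hA hp m, mulClosedCount_add_two hA hp _ (n + 1), ih,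
      primitiveCount_mul_add_two hA hp]
    ring

lemma mulClosedCount_one_one (hp : p.Prime) :
    mulClosedCount A p 1 1 = primitiveCount A p 1 1 :=
  mulClosedCount_eq_primitiveCount hp (hA ▸ one_lt_two)

lemma mulClosedCount_one_two (hp : p.Prime) :
    mulClosedCount A p 1 2 = primitiveCount A p 1 2 + 1 := by
  rw [mulClosedCount_add_two hA hp, mulClosedCount_zero]

lemma mulClosedCount_add_three (hp : p.Prime) (m n : ℕ) :
    mulClosedCount A p m (n + 3) =
      p * mulClosedCount A p m n + primitiveCount A p m (n + 3) + 1 := by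
  rw [mulClosedCount_add_two hA hp m (n + 1), mulClosedCount_mul_succ hA hp]
  ring

end Count

/-! ### Conductors of primitive subrings -/

section Conductor

open Module
open scoped Pointwise

lemma relIndex_sup_zmultiples {G : Type*} [AddCommGroup G] {p k : ℕ} (hp : p.Prime)
    {H : AddSubgroup G} {x : G} (hk : p ^ k • x ∉ H) (hk' : p ^ (k + 1) • x ∈ H) :
    H.relIndex (H ⊔ AddSubgroup.zmultiples x) = p ^ (k + 1) := by
  have := Fact.mk hp
  have hker := AddSubgroup.relIndex_ker (AddSubgroup.zmultiples x) (QuotientAddGroup.mk' H)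
  rw [QuotientAddGroup.ker_mk', AddMonoidHom.map_zmultiples, Nat.card_zmultiples] at hker
  rw [AddSubgroup.relIndex_sup_left, hker]
  apply addOrderOf_eq_prime_pow <;>
    rwa [← map_nsmul, QuotientAddGroup.mk'_apply, QuotientAddGroup.eq_zero_iff]

lemma pow_mul_index_sup_zmultiples {G : Type*} [AddCommGroup G] {p k : ℕ} (hp : p.Prime)
    {H : AddSubgroup G} {x : G} (hk : p ^ k • x ∉ H) (hk' : p ^ (k + 1) • x ∈ H) :
    p ^ (k + 1) * (H ⊔ AddSubgroup.zmultiples x).index = H.index := by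
  rw [← relIndex_sup_zmultiples hp hk hk']
  exact AddSubgroup.relIndex_mul_index le_sup_left

variable {A : Type*} [CommRing A]

/-- The image in `A / ℤ` of an ideal of `A`. -/
def idealImage (C : Ideal A) : AddSubgroup (ModInt A) :=
  C.toAddSubgroup.map (toModInt A)

lemma idealImage_mono : Monotone (idealImage : Ideal A → _) :=
  fun _ _ h => AddSubgroup.map_mono h

lemma idealImage_span_natCast (n : ℕ) : idealImage (Ideal.span {(n : A)}) = n • ⊤ := by
  rw [← toModInt_nsmul_top, idealImage]
  congr 1
  ext x
  rw [Submodule.mem_toAddSubgroup, Ideal.mem_span_singleton, mem_nsmul]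
  simp only [AddSubgroup.mem_top, true_and, nsmul_eq_mul, dvd_def, eq_comm]

lemma isMulClosed_idealImage (C : Ideal A) : IsMulClosed 1 (idealImage C) := by
  rintro x y ⟨c, hc, hcx⟩ ⟨d, hd, hdy⟩
  obtain ⟨m, rfl⟩ := toModInt_eq_iff.mp hcx.symm
  obtain ⟨n, rfl⟩ := toModInt_eq_iff.mp hdy.symm
  refine ⟨c * d + n * c + m * d, ?_, toModInt_eq_iff.mpr ⟨-(m * n), by push_cast; ring⟩⟩
  exact C.add_mem (C.add_mem (C.mul_mem_left _ hd) (C.mul_mem_left _ hc)) (C.mul_mem_left _ hd)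

/-- The conductor of a subring of `A`: the largest ideal of `A` contained in it. -/
def subringConductor (S : Subring A) : Ideal A where
  carrier := {x | ∀ y, x * y ∈ S}
  add_mem' ha hb y := add_mul _ _ y ▸ S.add_mem (ha y) (hb y)
  zero_mem' y := (zero_mul y).symm ▸ S.zero_mem
  smul_mem' c x hx y := by
    rw [smul_eq_mul, mul_comm c, mul_assoc]
    exact hx _

lemma le_subringConductor {S : Subring A} {C : Ideal A} (h : idealImage C ≤ subringImage S) :
    C ≤ subringConductor S :=
  fun _ hx y => toModInt_mem_subringImage.mp (h ⟨_, C.mul_mem_right y hx, rfl⟩)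

lemma idealImage_subringConductor_le (S : Subring A) :
    idealImage (subringConductor S) ≤ subringImage S := by
  rintro _ ⟨x, hx, rfl⟩
  exact toModInt_mem_subringImage.mpr (mul_one x ▸ hx 1)

/-- If `A` is generated by `β` as an abelian group modulo `S`, then `t ∈ S` is congruent modulo the
conductor to the integer `n` with `t * β ≡ n * β`. -/
lemma idealImage_subringConductor {S : Subring A} {β : A}
    (hβ : ∀ x : A, ∃ n : ℤ, x - n * β ∈ S) :
    idealImage (subringConductor S) = subringImage S := by
  refine (idealImage_subringConductor_le S).antisymm ?_
  rintro _ ⟨t, ht, rfl⟩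
  obtain ⟨n, hn⟩ := hβ (t * β)
  refine ⟨t - n, fun y => ?_, by rw [map_sub, toModInt_intCast, sub_zero]⟩
  obtain ⟨m, hm⟩ := hβ y
  have hexpand : (t - n) * y = (t - n) * (y - m * β) + m * (t * β - n * β) := by ring
  rw [hexpand]
  exact S.add_mem (S.mul_mem (S.sub_mem ht (intCast_mem S n)) hm) (S.mul_mem (intCast_mem S m) hn)

lemma pow_mul_mem_of_index_eq {S : Subring A} {p k : ℕ} (hS : S.toAddSubgroup.index = p ^ k)
    (x : A) : (p : A) ^ k * x ∈ S := by
  rw [← Nat.cast_pow, ← nsmul_eq_mul, ← hS]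
  exact AddSubgroup.nsmul_index_mem S.toAddSubgroup x

lemma exists_sub_intCast_mul_mem {S : Subring A} {p k : ℕ} (hp : p.Prime)
    (hS : S.toAddSubgroup.index = p ^ (k + 1)) {β : A} (hβ : (p : A) ^ k * β ∉ S) (x : A) :
    ∃ n : ℤ, x - n * β ∈ S := by
  have hindex := pow_mul_index_sup_zmultiples (H := S.toAddSubgroup) (x := β) (k := k) hp
    (by rwa [nsmul_eq_mul, Nat.cast_pow])
    (by rw [nsmul_eq_mul, Nat.cast_pow]; exact pow_mul_mem_of_index_eq hS β)
  have htop : S.toAddSubgroup ⊔ AddSubgroup.zmultiples β = ⊤ :=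
    AddSubgroup.index_eq_one.mp <| Nat.eq_of_mul_eq_mul_left (pow_pos hp.pos (k + 1)) <|
      (hindex.trans hS).trans (mul_one _).symm
  obtain ⟨s, hs, _, ⟨n, rfl⟩, rfl⟩ := AddSubgroup.mem_sup.mp (htop ▸ AddSubgroup.mem_top x)
  refine ⟨n, ?_⟩
  change s + n • β - n * β ∈ S
  rwa [zsmul_eq_mul, add_sub_cancel_right]

lemma ncard_eq_ncard_of_mul_eq {M : Type*} [CommMonoidWithZero M] [IsCancelMulZero M] {c : M}
    (hc : c ≠ 0) {s t : Set M} (hs : ∀ a ∈ s, a ∣ c) (ht : ∀ b ∈ t, b ∣ c)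
    (hst : ∀ a b, a * b = c → (a ∈ s ↔ b ∈ t)) : s.ncard = t.ncard := by
  choose! f hf using hs
  refine Set.ncard_congr (fun a _ => f a) (fun a ha => (hst _ _ (hf a ha).symm).mp ha) ?_ ?_
  · intro a b ha hb hab
    have h := (hf a ha).symm.trans (hf b hb)
    rw [hab] at h
    exact mul_right_cancel₀ (right_ne_zero_of_mul (hf b hb ▸ hc)) h
  · intro b hb
    obtain ⟨a, rfl⟩ := ht b hb
    have ha := (hst a b (mul_comm a b)).mpr hb
    refine ⟨a, ha, mul_left_cancel₀ (right_ne_zero_of_mul hc) ?_⟩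
    rw [← hf a ha, mul_comm]

section Dedekind

variable [IsDedekindDomain A] [Free ℤ A] {p k : ℕ}

lemma pow_mul_index_idealImage (hp : p.Prime) {C : Ideal A} (hk : (p : A) ^ k ∉ C)
    (hk' : (p : A) ^ (k + 1) ∈ C) : p ^ (k + 1) * (idealImage C).index = Ideal.absNorm C := by
  have hrange : (toModInt A).range = ⊤ := AddMonoidHom.range_eq_top.mpr toModInt_surjective
  have hindex := pow_mul_index_sup_zmultiples (H := C.toAddSubgroup) (x := 1) (k := k) hp
    (by rwa [nsmul_one, Nat.cast_pow]) (by rwa [nsmul_one, Nat.cast_pow])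
  rw [idealImage, AddSubgroup.index_map, QuotientAddGroup.ker_mk', hrange, AddSubgroup.index_top,
    mul_one]
  exact hindex

/-- The ideals occurring as conductors of the subrings of index `p ^ k` that are primitive at `p`,
when `A` has rank three. -/
structure IsPrimitiveConductor (p k : ℕ) (C : Ideal A) : Prop where
  pow_mem : (p : A) ^ k ∈ C
  absNorm_eq : Ideal.absNorm C = p ^ (2 * k)
  not_le : ¬ C ≤ Ideal.span {(p : A)}

/-- The ideals of `A` whose quotient is a cyclic group of order `p ^ k`. -/
structure HasCyclicQuotient (p k : ℕ) (I : Ideal A) : Prop where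
  absNorm_eq : Ideal.absNorm I = p ^ k
  pow_notMem : ∀ j < k, (p : A) ^ j ∉ I

lemma hasCyclicQuotient_succ_iff {I : Ideal A} :
    HasCyclicQuotient p (k + 1) I ↔ Ideal.absNorm I = p ^ (k + 1) ∧ (p : A) ^ k ∉ I := by
  refine ⟨fun h => ⟨h.absNorm_eq, h.pow_notMem k k.lt_succ_self⟩, fun ⟨hI, hk⟩ => ⟨hI, ?_⟩⟩
  exact fun j hj hmem => hk (I.mem_of_dvd (pow_dvd_pow _ (Nat.le_of_lt_succ hj)) hmem)

variable [Module.Finite ℤ A]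

lemma span_natCast_ne_zero {n : ℕ} (hn : n ≠ 0) : Ideal.span {(n : A)} ≠ 0 := by
  intro h
  have hnorm := Ideal.absNorm_span_natCast (S := A) n
  rw [h, map_zero] at hnorm
  exact pow_ne_zero _ hn hnorm.symm

lemma pow_mem_iff_of_mul_eq (hp : p ≠ 0) {C I : Ideal A}
    (hCI : C * I = Ideal.span {(p : A)} ^ (k + 1)) :
    (p : A) ^ k ∈ I ↔ C ≤ Ideal.span {(p : A)} := by
  have hspan := span_natCast_ne_zero (A := A) hp
  have hC : C ≠ 0 := left_ne_zero_of_mul (hCI ▸ pow_ne_zero _ hspan)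
  rw [← Ideal.span_singleton_le_iff_mem, ← Ideal.span_singleton_pow, ← Ideal.dvd_iff_le,
    ← Ideal.dvd_iff_le, ← mul_dvd_mul_iff_left hC, hCI, pow_succ', mul_comm C,
    mul_comm (Ideal.span _), mul_dvd_mul_iff_left (pow_ne_zero _ hspan)]

variable (hA : finrank ℤ A = 3)
include hA

lemma absNorm_mul_absNorm_of_mul_eq {C I : Ideal A}
    (hCI : C * I = Ideal.span {(p : A)} ^ (k + 1)) :
    Ideal.absNorm C * Ideal.absNorm I = p ^ (2 * (k + 1)) * p ^ (k + 1) := by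
  rw [← map_mul, hCI, map_pow, Ideal.absNorm_span_natCast, hA]
  ring

lemma finrank_modInt_eq_two : finrank ℤ (ModInt A) = 2 := by
  have h := finrank_modInt_add_one (A := A)
  omega

lemma isPrimitiveConductor_subringConductor (hp : p.Prime) {S : Subring A}
    (hS : IsPrimitive p (k + 1) (subringImage S)) :
    IsPrimitiveConductor p (k + 1) (subringConductor S) ∧
      idealImage (subringConductor S) = subringImage S := by
  have hindex := (index_subringImage S).symm.trans hS.index_eq
  obtain ⟨z, hz⟩ := hS.exists_pow_nsmul_notMem (finrank_modInt_eq_two hA) hp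
  obtain ⟨β, rfl⟩ := toModInt_surjective z
  rw [← toModInt_natCast_mul, toModInt_mem_subringImage, Nat.cast_pow] at hz
  have himage := idealImage_subringConductor (exists_sub_intCast_mul_mem hp hindex hz)
  have hmem : (p : A) ^ (k + 1) ∈ subringConductor S := pow_mul_mem_of_index_eq hindex
  have hnotMem : (p : A) ^ k ∉ subringConductor S := fun h => hz (h β)
  refine ⟨⟨hmem, ?_, fun hle => hS.not_le ?_⟩, himage⟩
  · rw [← pow_mul_index_idealImage hp hnotMem hmem, himage, hS.index_eq]
    ring
  · rw [← himage, ← idealImage_span_natCast]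
    exact idealImage_mono hle

lemma isPrimitiveConductor_iff_hasCyclicQuotient (hp : p.Prime) {C I : Ideal A}
    (hCI : C * I = Ideal.span {(p : A)} ^ (k + 1)) :
    IsPrimitiveConductor p (k + 1) C ↔ HasCyclicQuotient p (k + 1) I := by
  have hnorm := absNorm_mul_absNorm_of_mul_eq hA hCI
  have hpow := pow_mem_iff_of_mul_eq hp.ne_zero hCI
  rw [hasCyclicQuotient_succ_iff, hpow]
  refine ⟨fun hC => ⟨?_, hC.not_le⟩, fun ⟨hI, hle⟩ => ⟨?_, ?_, hle⟩⟩
  · rw [hC.absNorm_eq] at hnorm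
    exact Nat.eq_of_mul_eq_mul_left (pow_pos hp.pos _) hnorm
  · rw [← Ideal.span_singleton_le_iff_mem, ← Ideal.span_singleton_pow, ← hCI]
    exact Ideal.mul_le_left
  · rw [hI] at hnorm
    exact Nat.eq_of_mul_eq_mul_right (pow_pos hp.pos _) hnorm

namespace IsPrimitiveConductor

variable {C : Ideal A}

omit [Module.Finite ℤ A] hA in
lemma dvd (hC : IsPrimitiveConductor p k C) : C ∣ Ideal.span {(p : A)} ^ k := by
  rw [Ideal.dvd_iff_le, Ideal.span_singleton_pow, Ideal.span_singleton_le_iff_mem]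
  exact hC.pow_mem

/-- If `p ^ k ∈ C`, the cofactor `I = p ^ (k + 1) / C` lies in `p A`, but its image in `A / ℤ`
has index one. -/
lemma pow_notMem (hp : p.Prime) (hC : IsPrimitiveConductor p (k + 1) C) : (p : A) ^ k ∉ C := by
  intro hmem
  obtain ⟨I, hI⟩ := hC.dvd
  have hcyclic := (isPrimitiveConductor_iff_hasCyclicQuotient hA hp hI.symm).mp hC
  have hIp : I ≤ Ideal.span {(p : A)} :=
    (pow_mem_iff_of_mul_eq hp.ne_zero ((mul_comm I C).trans hI.symm)).mp hmem
  have hpI : (p : A) ^ (k + 1) ∈ I := by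
    rw [← Nat.cast_pow, ← hcyclic.absNorm_eq]
    exact Ideal.absNorm_mem I
  have hindex := pow_mul_index_idealImage hp (hcyclic.pow_notMem k k.lt_succ_self) hpI
  rw [hcyclic.absNorm_eq, mul_eq_left₀ (pow_ne_zero _ hp.ne_zero), ← pow_zero p] at hindex
  have hprim := IsPrimitive.of_index_eq_of_lt hp hindex (finrank_modInt_eq_two hA ▸ two_pos)
  exact hprim.not_le (idealImage_span_natCast (A := A) p ▸ idealImage_mono hIp)

omit [Module.Finite ℤ A] hA in
/-- Otherwise an element of `C` outside `p A` is an integer prime to `p` modulo `p A`, hence `C` is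
coprime to `p`. -/
lemma not_idealImage_le (hp : p.Prime) (hC : IsPrimitiveConductor p (k + 1) C) :
    ¬ idealImage C ≤ p • ⊤ := by
  intro hle
  obtain ⟨c, hc, hcp⟩ := SetLike.not_le_iff_exists.mp hC.not_le
  obtain ⟨z, -, hz⟩ := mem_nsmul.mp (hle ⟨c, hc, rfl⟩)
  obtain ⟨o, rfl⟩ := toModInt_surjective z
  rw [← toModInt_natCast_mul, eq_comm, toModInt_eq_iff] at hz
  obtain ⟨n, hn⟩ := hz
  have hnp : ¬ (p : ℤ) ∣ n := by
    rintro ⟨m, rfl⟩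
    exact hcp (Ideal.mem_span_singleton.mpr ⟨o + m, by rw [hn]; push_cast; ring⟩)
  obtain ⟨u, v, huv⟩ := (Nat.prime_iff_prime_int.mp hp).coprime_iff_not_dvd.mpr hnp
  have hcoprime : IsCoprime C (Ideal.span {(p : A)}) := by
    refine Ideal.isCoprime_iff_exists.mpr ⟨v * c, C.mul_mem_left _ hc, p * (u - v * o),
      Ideal.mul_mem_right _ _ (Ideal.mem_span_singleton_self _), ?_⟩
    have huv' : (u : A) * p + v * n = 1 := by exact_mod_cast congrArg (Int.cast : ℤ → A) huv
    rw [hn, ← huv']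
    ring
  have htop : C = ⊤ := Ideal.isUnit_iff.mp ((hcoprime.pow_right (n := k + 1)).isUnit_of_dvd hC.dvd)
  have hnorm := hC.absNorm_eq
  rw [htop, Ideal.absNorm_top] at hnorm
  exact hnorm.not_lt (Nat.one_lt_pow (by omega) hp.one_lt)

lemma isPrimitive_idealImage (hp : p.Prime) (hC : IsPrimitiveConductor p (k + 1) C) :
    IsPrimitive p (k + 1) (idealImage C) where
  index_eq := by
    have hindex := pow_mul_index_idealImage hp (hC.pow_notMem hA hp) hC.pow_mem
    rw [hC.absNorm_eq, two_mul, pow_add p (k + 1) (k + 1)] at hindex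
    exact Nat.eq_of_mul_eq_mul_left (pow_pos hp.pos (k + 1)) hindex
  not_le := hC.not_idealImage_le hp

lemma eq_subringConductor (hp : p.Prime) (hC : IsPrimitiveConductor p (k + 1) C) {S : Subring A}
    (hS : idealImage C = subringImage S) : C = subringConductor S := by
  have hprim := hC.isPrimitive_idealImage hA hp
  rw [hS] at hprim
  have hnorm := (isPrimitiveConductor_subringConductor hA hp hprim).1.absNorm_eq
  exact Submodule.toAddSubgroup_injective <|
    addSubgroup_eq_of_le_of_index_eq (le_subringConductor hS.le) (hC.absNorm_eq.trans hnorm.symm)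
      (hnorm.trans_ne (pow_ne_zero _ hp.ne_zero))

end IsPrimitiveConductor

lemma primitiveCount_one_eq_ncard_isPrimitiveConductor (hp : p.Prime) (k : ℕ) :
    primitiveCount A p 1 (k + 1) = {C : Ideal A | IsPrimitiveConductor p (k + 1) C}.ncard := by
  refine (Set.ncard_congr (fun C _ => idealImage C) ?_ ?_ ?_).symm
  · exact fun C hC => ⟨hC.isPrimitive_idealImage hA hp, isMulClosed_idealImage C⟩
  · intro C D hC hD hCD
    obtain ⟨S, hS⟩ := isMulClosed_one_iff.mp (isMulClosed_idealImage C)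
    rw [hC.eq_subringConductor hA hp hS.symm, hD.eq_subringConductor hA hp (hCD ▸ hS.symm)]
  · rintro M ⟨hM, hclosed⟩
    obtain ⟨S, rfl⟩ := isMulClosed_one_iff.mp hclosed
    obtain ⟨hC, hCS⟩ := isPrimitiveConductor_subringConductor hA hp hM
    exact ⟨subringConductor S, hC, hCS⟩

/-- The primitive subring of conductor `C` corresponds to the ideal `p ^ (k + 1) / C`. -/
lemma primitiveCount_one_eq_ncard_hasCyclicQuotient (hp : p.Prime) (k : ℕ) :
    primitiveCount A p 1 (k + 1) = {I : Ideal A | HasCyclicQuotient p (k + 1) I}.ncard := by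
  rw [primitiveCount_one_eq_ncard_isPrimitiveConductor hA hp]
  refine ncard_eq_ncard_of_mul_eq (pow_ne_zero (k + 1) (span_natCast_ne_zero hp.ne_zero))
    (fun C hC => hC.dvd) (fun I hI => ?_)
    (fun C I hCI => isPrimitiveConductor_iff_hasCyclicQuotient hA hp hCI)
  rw [Ideal.dvd_iff_le, Ideal.span_singleton_pow, Ideal.span_singleton_le_iff_mem, ← Nat.cast_pow,
    ← hI.absNorm_eq]
  exact Ideal.absNorm_mem I

end Dedekind

end Conductor

/-! ### Splitting of a rational prime -/

section Splitting

open Module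

/-- In the application `e` and `f` are the ramification indices and residue degrees of the primes
above a rational prime. The identity is checked for each splitting type. -/
lemma prod_one_add_pow_eq_of_sum_mul_eq_three {ι R : Type*} [Fintype ι] [CommRing R] {e f : ι → ℕ}
    (he : ∀ i, 0 < e i) (hf : ∀ i, 0 < f i) (hsum : ∑ i, e i * f i = 3) (x : R) :
    ∏ i, (1 + x ^ f i) = (1 + x) * (1 - x + x ^ 2 +
      (∑ i, if f i = 1 then 1 else 0) * (x - x ^ 2) +
      (∑ i, if f i = 1 ∧ e i = 1 then 1 else 0) * x ^ 2) := by
  classical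
  have hcard : (Finset.univ : Finset ι).card ≤ 3 := by
    rw [← hsum, Finset.card_eq_sum_ones]
    exact Finset.sum_le_sum fun i _ => Nat.mul_pos (he i) (hf i)
  have hle (i : ι) : e i ≤ 3 ∧ f i ≤ 3 := by
    have hi := hsum ▸ Finset.single_le_sum (fun _ _ => Nat.zero_le _) (Finset.mem_univ i)
    exact ⟨(Nat.le_mul_of_pos_right _ (hf i)).trans hi, (Nat.le_mul_of_pos_left _ (he i)).trans hi⟩
  generalize (Finset.univ : Finset ι) = s at hsum hcard ⊢
  interval_cases h : s.card
  · rw [Finset.card_eq_zero.mp h, Finset.sum_empty] at hsum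
    contradiction
  · obtain ⟨a, rfl⟩ := Finset.card_eq_one.mp h
    simp only [Finset.sum_singleton, Finset.prod_singleton] at hsum ⊢
    obtain ⟨⟨hea, hfa⟩, hea', hfa'⟩ := hle a, he a, hf a
    interval_cases e a <;> interval_cases f a
    all_goals first | omega | norm_num <;> ring
  · obtain ⟨a, b, hab, rfl⟩ := Finset.card_eq_two.mp h
    simp only [Finset.sum_pair hab, Finset.prod_pair hab] at hsum ⊢
    obtain ⟨⟨hea, hfa⟩, hea', hfa'⟩ := hle a, he a, hf a
    obtain ⟨⟨heb, hfb⟩, heb', hfb'⟩ := hle b, he b, hf b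
    interval_cases e a <;> interval_cases f a <;> interval_cases e b <;> interval_cases f b
    all_goals first | omega | norm_num <;> ring
  · have hone (i : ι) (hi : i ∈ s) : f i = 1 ∧ e i = 1 := by
      have h1 := (Finset.sum_eq_sum_iff_of_le fun i _ => Nat.mul_pos (he i) (hf i)).mp
        ((Finset.card_eq_sum_ones s).symm.trans (h.trans hsum.symm)) i hi
      exact ⟨Nat.eq_one_of_mul_eq_one_left h1.symm, Nat.eq_one_of_mul_eq_one_right h1.symm⟩
    rw [Finset.prod_congr rfl fun i hi => by rw [(hone i hi).1],
      Finset.sum_congr rfl fun i hi => if_pos (hone i hi).1,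
      Finset.sum_congr rfl fun i hi => if_pos (hone i hi), Finset.prod_const, Finset.sum_const, h]
    norm_num
    ring

variable {A : Type*} [CommRing A] {p k : ℕ}

lemma mem_primesOver_span_natCast_iff (hp : p.Prime) {P : Ideal A} :
    P ∈ (Ideal.span {(p : ℤ)}).primesOver A ↔ P.IsPrime ∧ (p : A) ∈ P := by
  refine and_congr_right fun hP => ?_
  rw [Ideal.liesOver_span_iff hP.ne_top (Nat.prime_iff_prime_int.mp hp)]
  simp only [algebraMap_int_eq, eq_intCast, Int.cast_natCast]

variable [IsDedekindDomain A] [Free ℤ A] [Module.Finite ℤ A]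

lemma absNorm_eq_pow_inertiaDeg_of_mem (hp : p.Prime) {P : Ideal A} [P.IsPrime]
    (hP : (p : A) ∈ P) : Ideal.absNorm P = p ^ P.inertiaDeg ℤ := by
  have := ((mem_primesOver_span_natCast_iff hp).mpr ⟨‹_›, hP⟩).2
  exact (Ideal.pow_inertiaDeg p P).symm

lemma absNorm_eq_iff_inertiaDeg_eq_one (hp : p.Prime) {P : Ideal A} [P.IsPrime]
    (hP : (p : A) ∈ P) : Ideal.absNorm P = p ↔ P.inertiaDeg ℤ = 1 := by
  rw [absNorm_eq_pow_inertiaDeg_of_mem hp hP]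
  exact Nat.pow_eq_self_iff hp.one_lt

lemma not_sq_dvd_iff_ramificationIdx_eq_one (hp : p.Prime) {P : Ideal A} [P.IsPrime]
    (hP : (p : A) ∈ P) : ¬ P ^ 2 ∣ Ideal.span {(p : A)} ↔ P.ramificationIdx ℤ = 1 := by
  have := ((mem_primesOver_span_natCast_iff hp).mpr ⟨‹_›, hP⟩).2
  have hspan := span_natCast_ne_zero (A := A) hp.ne_zero
  have hmap : (Ideal.span {(p : ℤ)}).map (algebraMap ℤ A) = Ideal.span {(p : A)} := by
    simp only [Ideal.map_span, Set.image_singleton, algebraMap_int_eq, eq_intCast,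
      Int.cast_natCast]
  have hPdvd : P ∣ Ideal.span {(p : A)} := Ideal.dvd_span_singleton.mpr hP
  have hP0 : P ≠ ⊥ := ne_zero_of_dvd_ne_zero hspan hPdvd
  have hfin : FiniteMultiplicity P (Ideal.span {(p : A)}) :=
    FiniteMultiplicity.of_prime_left (Ideal.prime_of_isPrime hP0 ‹_›) hspan
  have hpos := Ideal.ramificationIdx_pos P ℤ
  rw [Ideal.IsDedekindDomain.ramificationIdx_eq_multiplicity (Ideal.span {(p : ℤ)}) P
    (hmap ▸ hspan), hmap] at hpos ⊢
  rw [hfin.pow_dvd_iff_le_multiplicity]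
  omega

/-- Some prime power `P ^ n` divides `I` but not `p ^ k`, and then `k < n`. -/
lemma HasCyclicQuotient.exists_eq_pow (hp : p.Prime) {I : Ideal A}
    (hI : HasCyclicQuotient p (k + 1) I) :
    ∃ P : Ideal A, Ideal.absNorm P = p ∧ I = P ^ (k + 1) := by
  have hI0 : I ≠ 0 := by
    rintro rfl
    have hnorm := hI.absNorm_eq
    rw [map_zero] at hnorm
    exact pow_ne_zero _ hp.ne_zero hnorm.symm
  have hndvd : ¬ I ∣ Ideal.span {(p : A)} ^ k := by
    rw [Ideal.span_singleton_pow, Ideal.dvd_span_singleton]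
    exact hI.pow_notMem k k.lt_succ_self
  rw [UniqueFactorizationMonoid.dvd_iff_emultiplicity_le hI0] at hndvd
  push Not at hndvd
  obtain ⟨P, hP, hlt⟩ := hndvd
  have := Ideal.isPrime_of_prime hP
  have hPI : P ∣ I := dvd_of_emultiplicity_pos (pos_of_gt hlt)
  have hpP : (p : A) ∈ P := by
    refine Ideal.IsPrime.mem_of_pow_mem ‹_› (k + 1) (Ideal.dvd_iff_le.mp hPI ?_)
    rw [← Nat.cast_pow, ← hI.absNorm_eq]
    exact Ideal.absNorm_mem I
  have hpow : P ^ (k + 1) ∣ I := by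
    refine pow_dvd_of_le_emultiplicity ?_
    rw [Nat.cast_add_one]
    refine Order.add_one_le_of_lt (lt_of_le_of_lt ?_ hlt)
    exact le_emultiplicity_of_pow_dvd
      (pow_dvd_pow_of_dvd (Ideal.dvd_span_singleton.mpr hpP) k)
  obtain ⟨J, rfl⟩ := hpow
  have hnorm := hI.absNorm_eq
  rw [map_mul, map_pow] at hnorm
  have hPp : p ∣ Ideal.absNorm P := by
    rw [absNorm_eq_pow_inertiaDeg_of_mem hp hpP]
    exact dvd_pow_self p (Ideal.inertiaDeg_pos P ℤ).ne'
  obtain ⟨c, hc⟩ := hPp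
  rw [hc, mul_pow, mul_assoc, mul_eq_left₀ (pow_ne_zero _ hp.ne_zero)] at hnorm
  have hJ := Nat.eq_one_of_mul_eq_one_left hnorm
  have hc1 := (Nat.pow_eq_one.mp (Nat.eq_one_of_mul_eq_one_right hnorm)).resolve_right
    k.succ_ne_zero
  refine ⟨P, by rw [hc, hc1, mul_one], ?_⟩
  rw [Ideal.absNorm_eq_one_iff.mp hJ, Ideal.mul_top]

/-- The number of prime ideals of residue degree one above `p`. -/
noncomputable def degreeOneCount (A : Type*) [CommRing A] [IsDedekindDomain A] [Free ℤ A]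
    (p : ℕ) : ℕ :=
  {P : Ideal A | Ideal.absNorm P = p}.ncard

/-- The number of unramified prime ideals of residue degree one above `p`. -/
noncomputable def unramifiedDegreeOneCount (A : Type*) [CommRing A] [IsDedekindDomain A]
    [Free ℤ A] (p : ℕ) : ℕ :=
  {P : Ideal A | Ideal.absNorm P = p ∧ ¬ P ^ 2 ∣ Ideal.span {(p : A)}}.ncard

omit [Module.Finite ℤ A] in
lemma ncard_hasCyclicQuotient_one (hp : p.Prime) :
    {I : Ideal A | HasCyclicQuotient p 1 I}.ncard = degreeOneCount A p := by
  congr 1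
  ext I
  rw [Set.mem_ofPred_eq, Set.mem_ofPred_eq, hasCyclicQuotient_succ_iff, pow_one, pow_zero,
    ← Ideal.ne_top_iff_one, and_iff_left_iff_imp]
  rintro hI rfl
  exact hp.ne_one (hI.symm.trans Ideal.absNorm_top)

lemma hasCyclicQuotient_pow_iff (hp : p.Prime) {P : Ideal A} (hP : Ideal.absNorm P = p) :
    HasCyclicQuotient p (k + 2) (P ^ (k + 2)) ↔ ¬ P ^ 2 ∣ Ideal.span {(p : A)} := by
  have hspan := span_natCast_ne_zero (A := A) hp.ne_zero
  obtain ⟨J, hJ⟩ := Ideal.dvd_span_singleton.mpr (hP ▸ Ideal.absNorm_mem P)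
  have hP0 : P ≠ ⊥ := left_ne_zero_of_mul (hJ ▸ hspan)
  have hPprime : Prime P := Ideal.prime_of_isPrime hP0
    (Ideal.isPrime_of_irreducible_absNorm (hP ▸ hp))
  rw [hasCyclicQuotient_succ_iff, map_pow, hP, and_iff_right rfl, ← Ideal.dvd_span_singleton,
    ← Ideal.span_singleton_pow, hJ, mul_pow, pow_succ P (k + 1),
    mul_dvd_mul_iff_left (pow_ne_zero _ hP0), hPprime.dvd_pow_iff_dvd k.succ_ne_zero, sq,
    mul_dvd_mul_iff_left hP0]

lemma ncard_hasCyclicQuotient_add_two (hp : p.Prime) (k : ℕ) :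
    {I : Ideal A | HasCyclicQuotient p (k + 2) I}.ncard = unramifiedDegreeOneCount A p := by
  refine (Set.ncard_congr (fun P _ => P ^ (k + 2)) ?_ ?_ ?_).symm
  · exact fun P hP => (hasCyclicQuotient_pow_iff hp hP.1).mpr hP.2
  · exact fun P Q _ _ hPQ => pow_left_injective (k + 1).succ_ne_zero hPQ
  · intro I hI
    obtain ⟨P, hP, rfl⟩ := hI.exists_eq_pow hp
    exact ⟨P, ⟨hP, (hasCyclicQuotient_pow_iff hp hP).mp hI⟩, rfl⟩

end Splitting

/-! ### The local ideal series -/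

section IdealSeries

open PowerSeries

variable {A : Type*} [CommRing A] [IsDedekindDomain A] [Module.Free ℤ A] {p : ℕ}

/-- The ideals of norm `p ^ k` all of whose prime divisors lie in `Q`. -/
def idealsSupportedOn (p : ℕ) (Q : Finset (Ideal A)) (k : ℕ) : Set (Ideal A) :=
  {I | Ideal.absNorm I = p ^ k ∧ ∀ P : Ideal A, P.IsPrime → I ≤ P → P ∈ Q}

lemma idealsSupportedOn_empty_zero : idealsSupportedOn (A := A) p ∅ 0 = {⊤} := by
  ext I
  rw [idealsSupportedOn, Set.mem_ofPred_eq, pow_zero, Ideal.absNorm_eq_one_iff,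
    Set.mem_singleton_iff, and_iff_left_iff_imp]
  rintro rfl P hP hle
  exact absurd (top_le_iff.mp hle) hP.ne_top

lemma idealsSupportedOn_empty_succ (hp : p.Prime) (k : ℕ) :
    idealsSupportedOn (A := A) p ∅ (k + 1) = ∅ := by
  refine Set.eq_empty_of_forall_notMem fun I hI => ?_
  have hne : I ≠ ⊤ := by
    rintro rfl
    exact (Nat.one_lt_pow k.succ_ne_zero hp.one_lt).ne (Ideal.absNorm_top.symm.trans hI.1)
  obtain ⟨P, hP, hIP⟩ := Ideal.exists_le_maximal I hne
  exact Finset.notMem_empty P (hI.2 P hP.isPrime hIP)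

section Insert

variable [DecidableEq (Ideal A)] {Q : Finset (Ideal A)} {P : Ideal A}

lemma idealsSupportedOn_insert_diff (hP : P.IsPrime) (hPQ : P ∉ Q) (k : ℕ) :
    idealsSupportedOn p (insert P Q) k \ {I | I ≤ P} = idealsSupportedOn p Q k := by
  ext I
  refine ⟨fun ⟨hI, hIP⟩ => ⟨hI.1, fun P' hP' hle => ?_⟩, fun hI =>
    ⟨⟨hI.1, fun P' hP' hle => Finset.mem_insert_of_mem (hI.2 P' hP' hle)⟩,
      fun hIP => hPQ (hI.2 P hP hIP)⟩⟩
  refine Finset.mem_of_mem_insert_of_ne (hI.2 P' hP' hle) ?_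
  rintro rfl
  exact hIP hle

lemma mul_mem_idealsSupportedOn_insert_iff (hp : p.Prime) (hP : P.IsPrime) {f : ℕ}
    (hPf : Ideal.absNorm P = p ^ f) {J : Ideal A} (k : ℕ) :
    P * J ∈ idealsSupportedOn p (insert P Q) (k + f) ↔
      J ∈ idealsSupportedOn p (insert P Q) k := by
  have hP0 : P ≠ ⊥ := by
    rintro rfl
    exact pow_ne_zero f hp.ne_zero (hPf.symm.trans Ideal.absNorm_bot)
  refine and_congr ?_ (forall₂_congr fun P' hP' => ⟨fun h hle => h (Ideal.mul_le_right.trans hle),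
    fun h hle => ?_⟩)
  · rw [map_mul, hPf, pow_add, mul_comm (p ^ k), mul_right_inj' (pow_ne_zero f hp.ne_zero)]
  · rcases hP'.mul_le.mp hle with hPP' | hJ
    · rw [(hP.isMaximal hP0).eq_of_le hP'.ne_top hPP']
      exact Finset.mem_insert_self _ _
    · exact h hJ

lemma ncard_idealsSupportedOn_insert_of_lt (hp : p.Prime) (hP : P.IsPrime) (hPQ : P ∉ Q) {f k : ℕ}
    (hPf : Ideal.absNorm P = p ^ f) (hk : k < f) :
    (idealsSupportedOn p (insert P Q) k).ncard = (idealsSupportedOn p Q k).ncard := by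
  rw [← idealsSupportedOn_insert_diff hP hPQ k, sdiff_eq_left.mpr]
  refine Set.disjoint_left.mpr fun I hI hIP => hk.not_ge ?_
  rw [← Nat.pow_dvd_pow_iff_le_right hp.one_lt, ← hPf, ← hI.1]
  exact Ideal.absNorm_dvd_absNorm_of_le hIP

variable [Module.Finite ℤ A]

lemma ncard_idealsSupportedOn_insert_add (hp : p.Prime) (hP : P.IsPrime) (hPQ : P ∉ Q) {f : ℕ}
    (hPf : Ideal.absNorm P = p ^ f) (k : ℕ) :
    (idealsSupportedOn p (insert P Q) (k + f)).ncard =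
      (idealsSupportedOn p (insert P Q) k).ncard + (idealsSupportedOn p Q (k + f)).ncard := by
  have hP0 : P ≠ ⊥ := by
    rintro rfl
    exact pow_ne_zero f hp.ne_zero (hPf.symm.trans Ideal.absNorm_bot)
  have : CharZero A := charZero_of_injective_algebraMap (FaithfulSMul.algebraMap_injective ℤ A)
  have hfin : (idealsSupportedOn p (insert P Q) (k + f)).Finite :=
    (Ideal.finite_setOfPred_absNorm_eq (p ^ (k + f))).subset fun I hI => hI.1
  have hinter : idealsSupportedOn p (insert P Q) (k + f) ∩ {I | I ≤ P} =
      (P * ·) '' idealsSupportedOn p (insert P Q) k := by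
    ext I
    constructor
    · rintro ⟨hI, hIP⟩
      obtain ⟨J, rfl⟩ := Ideal.dvd_iff_le.mpr hIP
      exact ⟨J, (mul_mem_idealsSupportedOn_insert_iff hp hP hPf k).mp hI, rfl⟩
    · rintro ⟨J, hJ, rfl⟩
      exact ⟨(mul_mem_idealsSupportedOn_insert_iff hp hP hPf k).mpr hJ, Ideal.mul_le_left⟩
  rw [← Set.ncard_inter_add_ncard_sdiff_eq_ncard _ {I | I ≤ P} hfin, hinter,
    idealsSupportedOn_insert_diff hP hPQ,
    Set.ncard_image_of_injective _ (mul_right_injective₀ hP0)]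

end Insert

/-- The generating series of the ideals of `p`-power norm all of whose prime divisors lie in
`Q`. -/
noncomputable def idealSeriesOn (p : ℕ) (Q : Finset (Ideal A)) : ℤ⟦X⟧ :=
  PowerSeries.mk fun k => ((idealsSupportedOn p Q k).ncard : ℤ)

lemma idealSeriesOn_empty (hp : p.Prime) : idealSeriesOn (A := A) p ∅ = 1 := by
  ext k
  rw [idealSeriesOn, coeff_mk, coeff_one]
  cases k with
  | zero => rw [idealsSupportedOn_empty_zero, Set.ncard_singleton, if_pos rfl, Nat.cast_one]
  | succ k =>
    rw [idealsSupportedOn_empty_succ hp, Set.ncard_empty, if_neg k.succ_ne_zero, Nat.cast_zero]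

variable [Module.Finite ℤ A]

lemma idealSeriesOn_insert_mul [DecidableEq (Ideal A)] (hp : p.Prime) {Q : Finset (Ideal A)}
    {P : Ideal A} (hP : P.IsPrime) (hPQ : P ∉ Q) {f : ℕ} (hPf : Ideal.absNorm P = p ^ f) :
    idealSeriesOn p (insert P Q) * (1 - X ^ f) = idealSeriesOn p Q := by
  ext k
  rw [mul_sub, mul_one, map_sub, coeff_mul_X_pow', idealSeriesOn, idealSeriesOn, coeff_mk,
    coeff_mk, coeff_mk]
  split_ifs with hk
  · obtain ⟨j, rfl⟩ := Nat.exists_eq_add_of_le' hk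
    rw [ncard_idealsSupportedOn_insert_add hp hP hPQ hPf, Nat.add_sub_cancel, Nat.cast_add,
      add_sub_cancel_left]
  · rw [ncard_idealsSupportedOn_insert_of_lt hp hP hPQ hPf (not_le.mp hk), sub_zero]

lemma idealSeriesOn_mul_prod (hp : p.Prime) {f : Ideal A → ℕ} (Q : Finset (Ideal A))
    (hQ : ∀ P ∈ Q, P.IsPrime ∧ Ideal.absNorm P = p ^ f P) :
    idealSeriesOn p Q * ∏ P ∈ Q, (1 - X ^ f P) = 1 := by
  classical
  induction Q using Finset.induction_on with
  | empty => rw [idealSeriesOn_empty hp, Finset.prod_empty, one_mul]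
  | insert P Q hPQ ih =>
    obtain ⟨hP, hPf⟩ := hQ P (Finset.mem_insert_self P Q)
    rw [Finset.prod_insert hPQ, ← mul_assoc, idealSeriesOn_insert_mul hp hP hPQ hPf]
    exact ih fun P' hP' => hQ P' (Finset.mem_insert_of_mem hP')

end IdealSeries

/-! ### Bell series and dilations of arithmetic functions -/

section ArithmeticFunctions

open ArithmeticFunction PowerSeries

variable {R : Type*} {d p : ℕ}

/-- The Bell series `∑ f (p ^ k) X ^ k` of an arithmetic function at `p`. -/
def bellSeries [Zero R] (p : ℕ) (f : ArithmeticFunction R) : R⟦X⟧ :=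
  PowerSeries.mk fun k => f (p ^ k)

lemma coeff_bellSeries [Semiring R] (f : ArithmeticFunction R) (k : ℕ) :
    coeff k (bellSeries p f) = f (p ^ k) :=
  coeff_mk k _

lemma bellSeries_mul [Semiring R] (hp : p.Prime) (f g : ArithmeticFunction R) :
    bellSeries p (f * g) = bellSeries p f * bellSeries p g := by
  ext k
  rw [coeff_bellSeries, coeff_mul, ArithmeticFunction.mul_apply,
    Nat.sum_divisorsAntidiagonal (fun x y => f x * g y), Nat.sum_divisors_prime_pow hp,
    Finset.Nat.sum_antidiagonal_eq_sum_range_succ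
      (fun i j => coeff i (bellSeries p f) * coeff j (bellSeries p g))]
  refine Finset.sum_congr rfl fun i hi => ?_
  rw [coeff_bellSeries, coeff_bellSeries,
    Nat.pow_div (Nat.lt_succ_iff.mp (Finset.mem_range.mp hi)) hp.pos]

/-- The arithmetic function supported on `d`-th powers with value `f k` at `k ^ d`; its Dirichlet
series is that of `f` evaluated at `d * s`. -/
noncomputable def dilate [Zero R] (d : ℕ) (f : ArithmeticFunction R) : ArithmeticFunction R where
  toFun := Function.extend (· ^ d) f 0
  map_zero' := by
    by_cases hd : d = 0
    · refine Function.extend_apply' _ _ _ ?_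
      rintro ⟨k, hk⟩
      simp [hd] at hk
    · rw [← zero_pow hd, (Nat.pow_left_injective hd).extend_apply, f.map_zero]

lemma dilate_pow [Zero R] (hd : d ≠ 0) (f : ArithmeticFunction R) (k : ℕ) :
    dilate d f (k ^ d) = f k :=
  (Nat.pow_left_injective hd).extend_apply _ _ _

lemma dilate_of_not_exists_pow_eq [Zero R] (f : ArithmeticFunction R) {n : ℕ}
    (hn : ¬ ∃ k, k ^ d = n) : dilate d f n = 0 :=
  Function.extend_apply' _ _ _ hn

lemma exists_pow_eq_mul_iff_of_coprime {m n : ℕ} (hmn : m.Coprime n) :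
    (∃ k, k ^ d = m * n) ↔ (∃ k, k ^ d = m) ∧ ∃ k, k ^ d = n := by
  constructor
  · rintro ⟨k, hk⟩
    obtain ⟨a, ha⟩ := exists_eq_pow_of_mul_eq_pow (Nat.isUnit_iff.mpr hmn) hk.symm
    obtain ⟨b, hb⟩ := exists_eq_pow_of_mul_eq_pow (Nat.isUnit_iff.mpr hmn.symm)
      ((mul_comm n m).trans hk.symm)
    exact ⟨⟨a, ha.symm⟩, b, hb.symm⟩
  · rintro ⟨⟨a, rfl⟩, b, rfl⟩
    exact ⟨a * b, mul_pow a b d⟩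

lemma isMultiplicative_dilate [MonoidWithZero R] (hd : d ≠ 0) {f : ArithmeticFunction R}
    (hf : f.IsMultiplicative) : (dilate d f).IsMultiplicative := by
  refine ⟨?_, fun {m n} hmn => ?_⟩
  · rw [← one_pow d, dilate_pow hd, hf.map_one]
  · by_cases h : (∃ k, k ^ d = m) ∧ ∃ k, k ^ d = n
    · obtain ⟨⟨a, rfl⟩, b, rfl⟩ := h
      have hab : a.Coprime b := (Nat.coprime_pow_left_iff (Nat.pos_of_ne_zero hd) _ _).mp
        ((Nat.coprime_pow_right_iff (Nat.pos_of_ne_zero hd) _ _).mp hmn)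
      rw [← mul_pow, dilate_pow hd, dilate_pow hd, dilate_pow hd, hf.map_mul_of_coprime hab]
    · rw [dilate_of_not_exists_pow_eq f (mt (exists_pow_eq_mul_iff_of_coprime hmn).mp h)]
      rcases not_and_or.mp h with h | h
      · rw [dilate_of_not_exists_pow_eq f h, zero_mul]
      · rw [dilate_of_not_exists_pow_eq f h, mul_zero]

lemma bellSeries_dilate [CommRing R] (hp : p.Prime) (hd : d ≠ 0) (f : ArithmeticFunction R) :
    bellSeries p (dilate d f) = expand d hd (bellSeries p f) := by
  ext k
  rw [coeff_bellSeries, coeff_expand]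
  split_ifs with h
  · obtain ⟨m, rfl⟩ := h
    rw [Nat.mul_div_cancel_left _ (Nat.pos_of_ne_zero hd), mul_comm, pow_mul, dilate_pow hd,
      coeff_bellSeries]
  · refine dilate_of_not_exists_pow_eq f ?_
    rintro ⟨c, hc⟩
    obtain ⟨m, -, rfl⟩ := (Nat.dvd_prime_pow hp).mp (hc ▸ dvd_pow_self c hd)
    rw [← pow_mul] at hc
    exact h ⟨m, by rw [← Nat.pow_right_injective hp.two_le hc, mul_comm]⟩

lemma eq_of_bellSeries_eq [CommSemiring R] {f g : ArithmeticFunction R} (hf : f.IsMultiplicative)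
    (hg : g.IsMultiplicative) (h : ∀ p : ℕ, p.Prime → bellSeries p f = bellSeries p g) :
    f = g := by
  rw [hf.eq_iff_eq_on_prime_powers f g hg]
  intro p k hp
  rw [← coeff_bellSeries, h p hp, coeff_bellSeries]

end ArithmeticFunctions

/-! ### The local identity -/

section LocalIdentity

open ArithmeticFunction Module PowerSeries

/-- The number of subrings of `A` of index `n`, as an arithmetic function. -/
noncomputable def subringCount (A : Type*) [CommRing A] : ArithmeticFunction ℕ :=
  toArithmeticFunction fun n => Nat.card {S : Subring A // S.toAddSubgroup.index = n}

/-- The number of ideals of `A` of norm `n`, as an arithmetic function. -/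
noncomputable def idealNormCount (A : Type*) [CommRing A] [IsDedekindDomain A] [Free ℤ A] :
    ArithmeticFunction ℕ :=
  toArithmeticFunction fun n => Nat.card {I : Ideal A // Ideal.absNorm I = n}

lemma toArithmeticFunction_apply_of_ne_zero {R : Type*} [Zero R] {f : ℕ → R} {n : ℕ}
    (hn : n ≠ 0) : toArithmeticFunction f n = f n :=
  if_neg hn

lemma mul_one_sub_eq_of_recurrence {R : Type*} [CommRing R] {b : ℕ → R} {c d : R} (h2 : b 2 = d)
    (h3 : ∀ n, b (n + 3) = c * b n + d) :
    PowerSeries.mk b * (1 - C c * X ^ 3) * (1 - X) =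
      (C (b 0) + C (b 1) * X) * (1 - X) + C d * X ^ 2 := by
  have hmul : PowerSeries.mk b * (1 - C c * X ^ 3) =
      C (b 0) + C (b 1) * X + C d * X ^ 2 * PowerSeries.mk 1 := by
    have hcomm : PowerSeries.mk b * (1 - C c * X ^ 3) =
      PowerSeries.mk b - C c * (PowerSeries.mk b * X ^ 3) := by ring
    ext k
    rw [hcomm]
    match k with
    | 0 => simp [mul_assoc]
    | 1 => simp [coeff_mul_X_pow', mul_assoc, coeff_X_pow_mul']
    | 2 => simp [coeff_mul_X_pow', mul_assoc, coeff_X_pow_mul', h2]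
    | n + 3 => simp [coeff_mul_X_pow', mul_assoc, coeff_X_pow_mul', h3]
  rw [hmul, add_mul, mul_assoc, mk_one_mul_one_sub_eq_one, mul_one]

variable {A : Type*} [CommRing A] [IsDedekindDomain A] [Free ℤ A] [Module.Finite ℤ A] {p : ℕ}

omit [IsDedekindDomain A] [Free ℤ A] [Module.Finite ℤ A] in
lemma subringCount_prime_pow (hp : p.Prime) (k : ℕ) :
    subringCount A (p ^ k) = mulClosedCount A p 1 k := by
  rw [subringCount, toArithmeticFunction_apply_of_ne_zero (pow_ne_zero k hp.ne_zero),
    natCard_subring_index_eq, mulClosedCount]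

lemma bellSeries_subringCount_mul (hA : finrank ℤ A = 3) (hp : p.Prime) :
    bellSeries p (subringCount A : ArithmeticFunction ℤ) * (1 - C (p : ℤ) * X ^ 3) * (1 - X) =
      1 - X + X ^ 2 + (degreeOneCount A p : ℤ⟦X⟧) * (X - X ^ 2) +
        (unramifiedDegreeOneCount A p : ℤ⟦X⟧) * X ^ 2 := by
  have hA' := finrank_modInt_eq_two hA
  have hcoeff : bellSeries p (subringCount A : ArithmeticFunction ℤ) =
      PowerSeries.mk fun k => (mulClosedCount A p 1 k : ℤ) := by
    ext k
    rw [coeff_bellSeries, natCoe_apply, subringCount_prime_pow hp, coeff_mk]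
  have h1 : mulClosedCount A p 1 1 = degreeOneCount A p := by
    rw [mulClosedCount_one_one hA' hp, primitiveCount_one_eq_ncard_hasCyclicQuotient hA hp,
      ncard_hasCyclicQuotient_one hp]
  have hprim (k : ℕ) : primitiveCount A p 1 (k + 2) = unramifiedDegreeOneCount A p := by
    rw [primitiveCount_one_eq_ncard_hasCyclicQuotient hA hp, ncard_hasCyclicQuotient_add_two hp]
  have h2 : (mulClosedCount A p 1 2 : ℤ) = unramifiedDegreeOneCount A p + 1 := by
    rw [mulClosedCount_one_two hA' hp, hprim 0, Nat.cast_add_one]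
  have h3 (n : ℕ) : (mulClosedCount A p 1 (n + 3) : ℤ) =
      p * mulClosedCount A p 1 n + (unramifiedDegreeOneCount A p + 1) := by
    rw [mulClosedCount_add_three hA' hp, hprim (n + 1)]
    push_cast
    ring
  rw [hcoeff, mul_one_sub_eq_of_recurrence h2 h3, mulClosedCount_zero, h1]
  simp only [Nat.cast_one, map_one, map_add, map_natCast]
  ring

variable [Fintype ((Ideal.span {(p : ℤ)}).primesOver A)]

omit [Module.Finite ℤ A] in
lemma cast_ncard_eq_sum_primesOver (hp : p.Prime) (R : Type*) [CommRing R] {q : Ideal A → Prop}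
    [DecidablePred q] (hq : ∀ P, q P → Ideal.absNorm P = p) :
    ({P | q P}.ncard : R) =
      ∑ P : (Ideal.span {(p : ℤ)}).primesOver A, if q P then 1 else 0 := by
  have himage : {P | q P} =
      Subtype.val '' {P : (Ideal.span {(p : ℤ)}).primesOver A | q P} := by
    ext P
    refine ⟨fun hP => ⟨⟨P, (mem_primesOver_span_natCast_iff hp).mpr ⟨?_, ?_⟩⟩, hP, rfl⟩, ?_⟩
    · exact Ideal.isPrime_of_irreducible_absNorm (hq P hP ▸ hp)
    · exact hq P hP ▸ Ideal.absNorm_mem P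
    · rintro ⟨P, hP, rfl⟩
      exact hP
  rw [himage, Set.ncard_image_of_injective _ Subtype.val_injective, Set.ncard_eq_toFinset_card',
    Set.toFinset_ofPred, Finset.sum_boole]

lemma prod_primesOver_one_add_pow (hA : finrank ℤ A = 3) (hp : p.Prime) {R : Type*} [CommRing R]
    (x : R) : ∏ P : (Ideal.span {(p : ℤ)}).primesOver A, (1 + x ^ P.1.inertiaDeg ℤ) =
      (1 + x) * (1 - x + x ^ 2 + degreeOneCount A p * (x - x ^ 2) +
        unramifiedDegreeOneCount A p * x ^ 2) := by
  classical
  have hprime (P : (Ideal.span {(p : ℤ)}).primesOver A) :=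
    (mem_primesOver_span_natCast_iff hp).mp P.2
  have hr : (degreeOneCount A p : R) = ∑ P : (Ideal.span {(p : ℤ)}).primesOver A,
      if P.1.inertiaDeg ℤ = 1 then 1 else 0 := by
    rw [degreeOneCount, cast_ncard_eq_sum_primesOver hp R fun P hP => hP]
    refine Finset.sum_congr rfl fun P _ => if_congr ?_ rfl rfl
    have := (hprime P).1
    exact absNorm_eq_iff_inertiaDeg_eq_one hp (hprime P).2
  have hu : (unramifiedDegreeOneCount A p : R) = ∑ P : (Ideal.span {(p : ℤ)}).primesOver A,
      if P.1.inertiaDeg ℤ = 1 ∧ P.1.ramificationIdx ℤ = 1 then 1 else 0 := by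
    rw [unramifiedDegreeOneCount, cast_ncard_eq_sum_primesOver hp R fun P hP => hP.1]
    refine Finset.sum_congr rfl fun P _ => if_congr ?_ rfl rfl
    have := (hprime P).1
    exact and_congr (absNorm_eq_iff_inertiaDeg_eq_one hp (hprime P).2)
      (not_sq_dvd_iff_ramificationIdx_eq_one hp (hprime P).2)
  have : (Ideal.span {(p : ℤ)}).IsPrime := (Ideal.span_singleton_prime
    (Nat.cast_ne_zero.mpr hp.ne_zero)).mpr (Nat.prime_iff_prime_int.mp hp)
  rw [hr, hu]
  refine prod_one_add_pow_eq_of_sum_mul_eq_three (fun P => ?_) (fun P => ?_) ?_ x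
  · have := (hprime P).1
    exact Ideal.ramificationIdx_pos P.1 ℤ
  · have := (hprime P).1
    exact Ideal.inertiaDeg_pos P.1 ℤ
  · rw [Ideal.sum_ramification_inertia_eq_finrank, hA]

lemma bellSeries_idealNormCount_mul_prod (hp : p.Prime) :
    bellSeries p (idealNormCount A : ArithmeticFunction ℤ) *
      ∏ P : (Ideal.span {(p : ℤ)}).primesOver A, (1 - X ^ P.1.inertiaDeg ℤ) = 1 := by
  have hprime (P) (hP : P ∈ ((Ideal.span {(p : ℤ)}).primesOver A).toFinset) :
      P.IsPrime ∧ Ideal.absNorm P = p ^ P.inertiaDeg ℤ := by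
    obtain ⟨hP, hpP⟩ := (mem_primesOver_span_natCast_iff hp).mp (Set.mem_toFinset.mp hP)
    exact ⟨hP, absNorm_eq_pow_inertiaDeg_of_mem hp hpP⟩
  have hseries : bellSeries p (idealNormCount A : ArithmeticFunction ℤ) =
      idealSeriesOn p ((Ideal.span {(p : ℤ)}).primesOver A).toFinset := by
    have hsupp (k : ℕ) : idealsSupportedOn p ((Ideal.span {(p : ℤ)}).primesOver A).toFinset k =
        {I | Ideal.absNorm I = p ^ k} := by
      ext I
      refine and_iff_left_of_imp fun hI P hP hIP => ?_
      rw [Set.mem_toFinset, mem_primesOver_span_natCast_iff hp]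
      refine ⟨hP, hP.mem_of_pow_mem k (hIP ?_)⟩
      rw [← Nat.cast_pow, ← hI]
      exact Ideal.absNorm_mem I
    ext k
    rw [coeff_bellSeries, idealSeriesOn, coeff_mk, hsupp, natCoe_apply, idealNormCount,
      toArithmeticFunction_apply_of_ne_zero (pow_ne_zero k hp.ne_zero)]
    rfl
  rw [hseries, Finset.prod_set_coe ((Ideal.span {(p : ℤ)}).primesOver A)
    (f := fun P => (1 - X ^ P.inertiaDeg ℤ : ℤ⟦X⟧))]
  exact idealSeriesOn_mul_prod hp _ hprime

omit [Fintype ((Ideal.span {(p : ℤ)}).primesOver A)] in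
lemma bellSeries_subringCount_mul_expand (hA : finrank ℤ A = 3) (hp : p.Prime) :
    bellSeries p (subringCount A : ArithmeticFunction ℤ) *
        expand 2 two_ne_zero (bellSeries p (idealNormCount A : ArithmeticFunction ℤ)) *
        ((1 - X ^ 2) * (1 - C (p : ℤ) * X ^ 3)) =
      bellSeries p (idealNormCount A : ArithmeticFunction ℤ) := by
  have := Fact.mk hp
  have : (Ideal.span {(p : ℤ)}).IsMaximal := Int.ideal_span_isMaximal_of_prime p
  have := Fintype.ofFinite ((Ideal.span {(p : ℤ)}).primesOver A)
  have hJ := bellSeries_idealNormCount_mul_prod (A := A) hp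
  set B := bellSeries p (subringCount A : ArithmeticFunction ℤ)
  set J := bellSeries p (idealNormCount A : ArithmeticFunction ℤ)
  set N : ℤ⟦X⟧ := ∏ P : (Ideal.span {(p : ℤ)}).primesOver A, (1 - X ^ P.1.inertiaDeg ℤ)
  set M : ℤ⟦X⟧ := ∏ P : (Ideal.span {(p : ℤ)}).primesOver A, (1 + X ^ P.1.inertiaDeg ℤ)
  have hJ2 : expand 2 two_ne_zero J * (M * N) = 1 := by
    have hsq (f : ℕ) : expand 2 two_ne_zero (1 - X ^ f : ℤ⟦X⟧) = (1 + X ^ f) * (1 - X ^ f) := by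
      rw [map_sub, map_one, map_pow, expand_X]
      ring
    rw [← Finset.prod_mul_distrib, ← Finset.prod_congr rfl fun P _ => hsq (P.1.inertiaDeg ℤ),
      ← map_prod, ← map_mul, hJ, map_one]
  have hB : B * ((1 - X ^ 2) * (1 - C (p : ℤ) * X ^ 3)) = M := by
    linear_combination (1 + X) * bellSeries_subringCount_mul hA hp -
      prod_primesOver_one_add_pow hA hp (X : ℤ⟦X⟧)
  linear_combination expand 2 two_ne_zero J * hB + J * hJ2 - expand 2 two_ne_zero J * M * hJ

end LocalIdentity

/-! ### Multiplicativity of the counts -/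

section Multiplicative

open ArithmeticFunction Module
open scoped Pointwise

variable {G : Type*} [AddCommGroup G] {m n : ℕ} {M N : AddSubgroup G}

lemma relIndex_coprime_of_nsmul_mem (hmn : m.Coprime n) (h0 : M.relIndex N ≠ 0)
    (h : ∀ x ∈ N, m • x ∈ M) : (M.relIndex N).Coprime n := by
  refine Nat.Coprime.symm (Nat.coprime_of_dvd fun q hq hqn hqi => ?_)
  have := Fact.mk hq
  have : Finite (N ⧸ M.addSubgroupOf N) := Nat.finite_of_card_ne_zero h0
  obtain ⟨x, hx⟩ := exists_prime_addOrderOf_dvd_card' q hqi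
  obtain ⟨g, rfl⟩ := QuotientAddGroup.mk_surjective x
  have hmg : m • (g : N ⧸ M.addSubgroupOf N) = 0 :=
    (QuotientAddGroup.eq_zero_iff (m • g)).mpr (h g g.2)
  exact Nat.not_coprime_of_dvd_of_dvd hq.one_lt (hx ▸ addOrderOf_dvd_of_nsmul_eq_zero hmg) hqn hmn

lemma index_sup_nsmul_top (hm : m ≠ 0) (hn : n ≠ 0) (hmn : m.Coprime n) (hM : M.index = m * n) :
    (M ⊔ m • ⊤).index = m := by
  have hmul : M.relIndex (M ⊔ m • ⊤) * (M ⊔ m • ⊤).index = m * n :=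
    (AddSubgroup.relIndex_mul_index le_sup_left).trans hM
  have h0 := mul_ne_zero_iff.mp (hmul.trans_ne (mul_ne_zero hm hn))
  have hindex : ((M ⊔ m • ⊤).relIndex ⊤).Coprime n :=
    relIndex_coprime_of_nsmul_mem hmn ((AddSubgroup.relIndex_top_right _).trans_ne h0.2)
      fun x _ => AddSubgroup.mem_sup_right (mem_nsmul.mpr ⟨x, trivial, rfl⟩)
  have hrel : (M.relIndex (M ⊔ m • ⊤)).Coprime m := by
    refine relIndex_coprime_of_nsmul_mem hmn.symm h0.1 fun x hx => ?_
    obtain ⟨y, hy, _, ⟨z, -, rfl⟩, rfl⟩ := AddSubgroup.mem_sup.mp hx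
    have hz : n • m • z ∈ M := by
      rw [smul_smul, mul_comm, ← hM]
      exact M.nsmul_index_mem z
    exact nsmul_add y (m • z) n ▸ M.add_mem (M.nsmul_mem hy n) hz
  rw [AddSubgroup.relIndex_top_right] at hindex
  exact Nat.dvd_antisymm (hindex.dvd_of_dvd_mul_right (hmul ▸ dvd_mul_left _ _))
    (hrel.symm.dvd_of_dvd_mul_left (hmul ▸ dvd_mul_right _ _))

lemma index_inf_eq_mul_of_coprime (h : M.index.Coprime N.index) :
    (M ⊓ N).index = M.index * N.index := by
  have hdvd : M.index * N.index ∣ (M ⊓ N).index :=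
    h.mul_dvd_of_dvd_of_dvd (AddSubgroup.index_dvd_of_le inf_le_left)
      (AddSubgroup.index_dvd_of_le inf_le_right)
  by_cases h0 : (M ⊓ N).index = 0
  · rw [h0, eq_comm, mul_eq_zero]
    by_contra! hne
    exact AddSubgroup.index_inf_ne_zero hne.1 hne.2 h0
  · exact le_antisymm AddSubgroup.index_inf_le (Nat.le_of_dvd (Nat.pos_of_ne_zero h0) hdvd)

lemma sup_nsmul_top_inf_sup_nsmul_top (hm : m ≠ 0) (hn : n ≠ 0) (hmn : m.Coprime n)
    (hM : M.index = m * n) : (M ⊔ m • ⊤) ⊓ (M ⊔ n • ⊤) = M := by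
  have h1 := index_sup_nsmul_top hm hn hmn hM
  have h2 := index_sup_nsmul_top hn hm hmn.symm (hM.trans (mul_comm m n))
  have hindex : ((M ⊔ m • ⊤) ⊓ (M ⊔ n • ⊤)).index = m * n := by
    rw [index_inf_eq_mul_of_coprime (by rwa [h1, h2]), h1, h2]
  exact (addSubgroup_eq_of_le_of_index_eq (le_inf le_sup_left le_sup_left)
    (hM.trans hindex.symm) (hindex.trans_ne (mul_ne_zero hm hn))).symm

lemma inf_sup_nsmul_top (hm : m ≠ 0) (hn : n ≠ 0) (hmn : m.Coprime n) (hM : M.index = m)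
    (hN : N.index = n) : M ⊓ N ⊔ m • ⊤ = M := by
  subst hM hN
  exact addSubgroup_eq_of_le_of_index_eq (sup_le inf_le_left (nsmul_top_le_of_index_eq rfl))
    (index_sup_nsmul_top hm hn hmn (index_inf_eq_mul_of_coprime hmn)) hm

lemma natCard_index_eq_mul_of_coprime {α : Type*} {φ : α → AddSubgroup G}
    (hφ : Function.Injective φ) (hinf : ∀ a b, ∃ c, φ c = φ a ⊓ φ b)
    (hsup : ∀ a (k : ℕ), ∃ c, φ c = φ a ⊔ k • ⊤) (hm : m ≠ 0) (hn : n ≠ 0) (hmn : m.Coprime n) :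
    Nat.card {a // (φ a).index = m * n} =
      Nat.card {a // (φ a).index = m} * Nat.card {a // (φ a).index = n} := by
  choose inf hinf using hinf
  choose sup hsup using hsup
  rw [← Nat.card_prod]
  refine Nat.card_congr
    { toFun a := (⟨sup a m, ?_⟩, ⟨sup a n, ?_⟩)
      invFun x := ⟨inf x.1 x.2, ?_⟩
      left_inv a := Subtype.ext (hφ ?_)
      right_inv x := Prod.ext (Subtype.ext (hφ ?_)) (Subtype.ext (hφ ?_)) }
  · rw [hsup, index_sup_nsmul_top hm hn hmn a.2]
  · rw [hsup, index_sup_nsmul_top hn hm hmn.symm (a.2.trans (mul_comm m n))]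
  · rw [hinf, index_inf_eq_mul_of_coprime (by rwa [x.1.2, x.2.2]), x.1.2, x.2.2]
  · rw [hinf, hsup, hsup, sup_nsmul_top_inf_sup_nsmul_top hm hn hmn a.2]
  · rw [hsup, hinf, inf_sup_nsmul_top hm hn hmn x.1.2 x.2.2]
  · rw [hsup, hinf, inf_comm, inf_sup_nsmul_top hn hm hmn.symm x.2.2 x.1.2]

variable (A : Type*) [CommRing A]

variable {A} in
lemma toAddSubgroup_span_natCast (n : ℕ) :
    (Ideal.span {(n : A)}).toAddSubgroup = n • (⊤ : AddSubgroup A) := by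
  ext x
  change x ∈ Ideal.span {(n : A)} ↔ _
  simp only [Ideal.mem_span_singleton', mem_nsmul, AddSubgroup.mem_top, true_and, nsmul_eq_mul,
    mul_comm]

lemma isMultiplicative_subringCount : (subringCount A).IsMultiplicative := by
  refine IsMultiplicative.iff_ne_zero.mpr ⟨?_, fun {m n} hm hn hmn => ?_⟩
  · have htop (S : Subring A) : S.toAddSubgroup.index = 1 ↔ S = ⊤ := by
      rw [AddSubgroup.index_eq_one, ← Subring.toAddSubgroup_injective.eq_iff]
      rfl
    rw [subringCount, toArithmeticFunction_apply_of_ne_zero one_ne_zero]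
    simp only [htop, Nat.card_unique]
  · rw [subringCount, toArithmeticFunction_apply_of_ne_zero (mul_ne_zero hm hn),
      toArithmeticFunction_apply_of_ne_zero hm, toArithmeticFunction_apply_of_ne_zero hn]
    refine natCard_index_eq_mul_of_coprime Subring.toAddSubgroup_injective
      (fun S T => ⟨S ⊓ T, rfl⟩) (fun S k => ?_) hm hn hmn
    let π := Ideal.Quotient.mk (Ideal.span {(k : A)})
    refine ⟨(S.map π).comap π, (AddSubgroup.comap_map_eq π.toAddMonoidHom S.toAddSubgroup).trans ?_⟩
    rw [← toAddSubgroup_span_natCast]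
    congr 1
    ext x
    exact Ideal.Quotient.eq_zero_iff_mem

lemma isMultiplicative_idealNormCount [IsDedekindDomain A] [Free ℤ A] :
    (idealNormCount A).IsMultiplicative := by
  refine IsMultiplicative.iff_ne_zero.mpr ⟨?_, fun {m n} hm hn hmn => ?_⟩
  · rw [idealNormCount, toArithmeticFunction_apply_of_ne_zero one_ne_zero]
    simp only [Ideal.absNorm_eq_one_iff, Nat.card_unique]
  · rw [idealNormCount, toArithmeticFunction_apply_of_ne_zero (mul_ne_zero hm hn),
      toArithmeticFunction_apply_of_ne_zero hm, toArithmeticFunction_apply_of_ne_zero hn]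
    refine natCard_index_eq_mul_of_coprime Submodule.toAddSubgroup_injective
      (fun I J => ⟨I ⊓ J, rfl⟩) (fun I k => ⟨I ⊔ Ideal.span {(k : A)}, ?_⟩) hm hn hmn
    rw [Submodule.sup_toAddSubgroup, toAddSubgroup_span_natCast]

end Multiplicative

/-! ### The global identity -/

section GlobalIdentity

open ArithmeticFunction Module PowerSeries
open scoped ArithmeticFunction.zeta

variable {R : Type*} {p : ℕ}

lemma natCoe_dilate [AddMonoidWithOne R] (d : ℕ) (f : ArithmeticFunction ℕ) :
    ((dilate d f : ArithmeticFunction ℕ) : ArithmeticFunction R) =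
      dilate d (f : ArithmeticFunction R) := by
  ext n
  have hzero : (Nat.cast ∘ (0 : ℕ → ℕ) : ℕ → R) = 0 := funext fun _ => Nat.cast_zero
  refine (Function.apply_extend (g := f) (Nat.cast : ℕ → R) (· ^ d) 0 n).trans ?_
  rw [hzero]
  rfl

lemma map_bellSeries [CommRing R] (f : ArithmeticFunction ℕ) :
    PowerSeries.map (Nat.castRingHom R) (bellSeries p f) =
      bellSeries p (f : ArithmeticFunction R) := by
  ext k
  rw [PowerSeries.coeff_map, coeff_bellSeries, coeff_bellSeries, natCoe_apply]
  rfl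

lemma bellSeries_zeta_mul_one_sub [CommRing R] (hp : p.Prime) :
    bellSeries p (ζ : ArithmeticFunction R) * (1 - X) = 1 := by
  have h : bellSeries p (ζ : ArithmeticFunction R) =
      PowerSeries.mk 1 := by
    ext k
    simp [coeff_bellSeries, hp.ne_zero, natCoe_apply]
  rw [h, mk_one_mul_one_sub_eq_one]

lemma bellSeries_id_mul_one_sub [CommRing R] (p : ℕ) :
    bellSeries p (ArithmeticFunction.id : ArithmeticFunction R) *
      (1 - C (p : R) * X) = 1 := by
  have h : bellSeries p (ArithmeticFunction.id : ArithmeticFunction R) =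
      rescale (p : R) (PowerSeries.mk 1) := by
    ext k
    simp [coeff_bellSeries, natCoe_apply]
  rw [h, ← rescale_X, ← map_one (rescale (p : R)), ← map_sub, ← map_mul,
    mk_one_mul_one_sub_eq_one]

theorem subringCount_mul_dilate_idealNormCount {A : Type*} [CommRing A] [IsDedekindDomain A]
    [Free ℤ A] [Module.Finite ℤ A] (hA : finrank ℤ A = 3) :
    subringCount A * dilate 2 (idealNormCount A) =
      idealNormCount A * dilate 2 ζ * dilate 3 ArithmeticFunction.id := by
  have hB := isMultiplicative_subringCount A
  have hJ := isMultiplicative_idealNormCount A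
  refine eq_of_bellSeries_eq (hB.mul (isMultiplicative_dilate two_ne_zero hJ))
    ((hJ.mul (isMultiplicative_dilate two_ne_zero isMultiplicative_zeta)).mul
      (isMultiplicative_dilate three_ne_zero isMultiplicative_id)) fun p hp => ?_
  refine PowerSeries.map_injective (Nat.castRingHom ℤ) Nat.cast_injective ?_
  have hζ := congrArg (expand 2 two_ne_zero) (bellSeries_zeta_mul_one_sub (R := ℤ) hp)
  have hid := congrArg (expand 3 three_ne_zero) (bellSeries_id_mul_one_sub (R := ℤ) p)
  simp only [map_mul, map_sub, map_one, expand_X, expand_C] at hζ hid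
  have hlocal := bellSeries_subringCount_mul_expand hA hp
  rw [map_bellSeries, map_bellSeries]
  simp only [natCoe_mul, natCoe_dilate, bellSeries_mul hp, bellSeries_dilate hp two_ne_zero,
    bellSeries_dilate hp three_ne_zero]
  set B := bellSeries p (subringCount A : ArithmeticFunction ℤ)
  set J := bellSeries p (idealNormCount A : ArithmeticFunction ℤ)
  set Z := expand 2 two_ne_zero (bellSeries p (ζ : ArithmeticFunction ℤ))
  set W := expand 3 three_ne_zero (bellSeries p (ArithmeticFunction.id : ArithmeticFunction ℤ))
  calc B * expand 2 two_ne_zero J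
    _ = B * expand 2 two_ne_zero J * (Z * (1 - X ^ 2)) * (W * (1 - C (p : ℤ) * X ^ 3)) := by
      rw [hζ, hid, mul_one, mul_one]
    _ = B * expand 2 two_ne_zero J * ((1 - X ^ 2) * (1 - C (p : ℤ) * X ^ 3)) * Z * W := by ring
    _ = J * Z * W := by rw [hlocal]

end GlobalIdentity

/-! ### Dirichlet series at real arguments -/

section DirichletSeries

open ArithmeticFunction Filter Topology
open scoped NumberField ArithmeticFunction.zeta

/-- The Dirichlet series of `f` at the real number `s` converges with sum `a`. The term at `n = 0`
vanishes because `f 0 = 0`. -/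
def HasDirichletSum (f : ArithmeticFunction ℕ) (s a : ℝ) : Prop :=
  HasSum (fun n : ℕ => (f n : ℝ) * (n : ℝ) ^ (-s)) a

variable {f g : ArithmeticFunction ℕ} {s a b : ℝ} {d : ℕ}

lemma lSeries_term_natCast (f : ArithmeticFunction ℕ) (s : ℝ) (n : ℕ) :
    LSeries.term (fun n => (f n : ℂ)) s n = ((f n : ℝ) * (n : ℝ) ^ (-s) : ℝ) := by
  rcases eq_or_ne n 0 with rfl | hn
  · rw [LSeries.term_zero, f.map_zero, Nat.cast_zero, zero_mul, Complex.ofReal_zero]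
  · rw [LSeries.term_of_ne_zero hn, Complex.ofReal_mul, Complex.ofReal_cpow (Nat.cast_nonneg n),
      Complex.ofReal_neg, Complex.cpow_neg, div_eq_mul_inv, Complex.ofReal_natCast,
      Complex.ofReal_natCast]

lemma hasDirichletSum_iff_lSeriesHasSum :
    HasDirichletSum f s a ↔ LSeriesHasSum (fun n => (f n : ℂ)) s a := by
  rw [LSeriesHasSum, funext (lSeries_term_natCast f s), Complex.hasSum_ofReal, HasDirichletSum]

lemma hasDirichletSum_iff_hasSum_succ : HasDirichletSum f s a ↔
    HasSum (fun n : ℕ => (f (n + 1) : ℝ) * ((n + 1 : ℕ) : ℝ) ^ (-s)) a := by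
  rw [HasDirichletSum, ← hasSum_nat_add_iff' 1]
  simp

lemma HasDirichletSum.mul (hf : HasDirichletSum f s a) (hg : HasDirichletSum g s b) :
    HasDirichletSum (f * g) s (a * b) := by
  rw [hasDirichletSum_iff_lSeriesHasSum] at hf hg ⊢
  have h := LSeriesHasSum_mul (f := (f : ArithmeticFunction ℂ)) (g := (g : ArithmeticFunction ℂ))
    hf hg
  rw [← natCoe_mul, ← Complex.ofReal_mul] at h
  exact h

lemma hasDirichletSum_dilate_iff (hd : d ≠ 0) :
    HasDirichletSum (dilate d f) s a ↔ HasDirichletSum f (d * s) a := by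
  have hpow (k : ℕ) : (dilate d f (k ^ d) : ℝ) * ((k ^ d : ℕ) : ℝ) ^ (-s) =
      (f k : ℝ) * (k : ℝ) ^ (-(d * s)) := by
    rw [dilate_pow hd, Nat.cast_pow, ← Real.rpow_natCast_mul (Nat.cast_nonneg k), mul_neg]
  have hsupp (n : ℕ) (hn : n ∉ Set.range fun k : ℕ => k ^ d) :
      (dilate d f n : ℝ) * (n : ℝ) ^ (-s) = 0 := by
    rw [dilate_of_not_exists_pow_eq f hn, Nat.cast_zero, zero_mul]
  rw [HasDirichletSum, ← (Nat.pow_left_injective hd).hasSum_iff hsupp]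
  exact iff_of_eq (congrArg (HasSum · a) (funext hpow))

lemma exists_hasDirichletSum_of_le (hg : HasDirichletSum g s b) (h : ∀ n, f n ≤ g n) :
    ∃ a, HasDirichletSum f s a := by
  refine hg.summable.of_nonneg_of_le (fun n => by positivity) fun n => ?_
  gcongr
  exact h n

lemma le_mul_of_map_one_eq_one (hg : g 1 = 1) (n : ℕ) : f n ≤ (f * g) n := by
  rcases eq_or_ne n 0 with rfl | hn
  · rw [f.map_zero]
    exact Nat.zero_le _
  · rw [ArithmeticFunction.mul_apply]
    calc f n = f n * g 1 := by rw [hg, mul_one]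
      _ ≤ ∑ x ∈ n.divisorsAntidiagonal, f x.1 * g x.2 :=
        Finset.single_le_sum (f := fun x : ℕ × ℕ => f x.1 * g x.2) (fun _ _ => Nat.zero_le _)
          (Nat.mem_divisorsAntidiagonal.mpr ⟨mul_one n, hn⟩ : (n, 1) ∈ n.divisorsAntidiagonal)

lemma hasDirichletSum_zeta_iff : HasDirichletSum ζ s a ↔
    HasSum (fun n : ℕ => ((n + 1 : ℕ) : ℝ) ^ (-s)) a := by
  rw [hasDirichletSum_iff_hasSum_succ]
  simp

lemma hasDirichletSum_id_iff : HasDirichletSum ArithmeticFunction.id s a ↔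
    HasSum (fun n : ℕ => ((n + 1 : ℕ) : ℝ) ^ (1 - s)) a := by
  rw [hasDirichletSum_iff_hasSum_succ]
  refine iff_of_eq (congrArg (HasSum · a) (funext fun n => ?_))
  rw [id_apply, sub_eq_add_neg, Real.rpow_add (by positivity), Real.rpow_one]

/-- The series of `subringCount A` converges because it is dominated by that of
`subringCount A * dilate 2 (idealNormCount A)`, which the identity expresses by known series. -/
theorem exists_hasDirichletSum_subringCount_mul_eq {A : Type*} [CommRing A] [IsDedekindDomain A]
    [Module.Free ℤ A] [Module.Finite ℤ A] (hA : Module.finrank ℤ A = 3) {j j₂ z w : ℝ}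
    (hj : HasDirichletSum (idealNormCount A) s j)
    (hj₂ : HasDirichletSum (idealNormCount A) (2 * s) j₂) (hz : HasDirichletSum ζ (2 * s) z)
    (hw : HasDirichletSum ArithmeticFunction.id (3 * s) w) :
    ∃ b, HasDirichletSum (subringCount A) s b ∧ b * j₂ = j * z * w := by
  have hj₂' : HasDirichletSum (dilate 2 (idealNormCount A)) s j₂ :=
    (hasDirichletSum_dilate_iff two_ne_zero).mpr (by exact_mod_cast hj₂)
  have hright := (hj.mul ((hasDirichletSum_dilate_iff two_ne_zero).mpr (by exact_mod_cast hz))).mul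
    ((hasDirichletSum_dilate_iff three_ne_zero).mpr (by exact_mod_cast hw))
  rw [← subringCount_mul_dilate_idealNormCount hA] at hright
  have hone : dilate 2 (idealNormCount A) 1 = 1 :=
    (isMultiplicative_dilate two_ne_zero (isMultiplicative_idealNormCount A)).map_one
  obtain ⟨b, hb⟩ := exists_hasDirichletSum_of_le hright (le_mul_of_map_one_eq_one hone)
  exact ⟨b, hb, (hb.mul hj₂').unique hright⟩

lemma exists_hasDirichletSum_zeta (hs : 1 < s) : ∃ a, HasDirichletSum ζ s a := by
  simp only [hasDirichletSum_zeta_iff]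
  exact (summable_nat_add_iff 1).mpr (Real.summable_nat_rpow.mpr (neg_lt_neg hs))

lemma exists_hasDirichletSum_id (hs : 2 < s) : ∃ a, HasDirichletSum ArithmeticFunction.id s a := by
  simp only [hasDirichletSum_id_iff]
  exact (summable_nat_add_iff 1).mpr (Real.summable_nat_rpow.mpr (by linarith))

/-- A non-summable `LSeries` has junk value `0`, whereas the class number formula makes the Dedekind
zeta function nonzero just to the right of `1`. -/
lemma exists_hasDirichletSum_idealNormCount (K : Type*) [Field K] [NumberField K] (hs : 1 < s) :
    ∃ a, HasDirichletSum (idealNormCount (𝓞 K)) s a := by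
  have hne : ∀ᶠ t : ℝ in 𝓝[>] 1, (t - 1) * NumberField.dedekindZeta K t ≠ 0 :=
    (NumberField.tendsto_sub_one_mul_dedekindZeta_nhdsGT K).eventually_ne
      (Complex.ofReal_ne_zero.mpr (NumberField.dedekindZeta_residue_ne_zero K))
  obtain ⟨t, ht, hts⟩ := (hne.and (Ioo_mem_nhdsGT hs)).exists
  have hsum : LSeriesSummable (fun n => Nat.card {I : Ideal (𝓞 K) // Ideal.absNorm I = n}) t := by
    by_contra h
    exact right_ne_zero_of_mul ht (LSeries.eq_zero_of_not_LSeriesSummable _ _ h)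
  have hsum' : LSeriesSummable (fun n => (idealNormCount (𝓞 K) n : ℂ)) s := by
    refine (LSeriesSummable_congr _ fun {n} hn => ?_).mp
      (hsum.of_re_le_re (s' := s) (by simpa using hts.2.le))
    rw [idealNormCount, toArithmeticFunction_apply_of_ne_zero hn]
  rw [LSeriesSummable, funext (lSeries_term_natCast _ s), Complex.summable_ofReal] at hsum'
  exact hsum'

end DirichletSeries

section NumberField

open ArithmeticFunction
open scoped ArithmeticFunction.zeta

variable (K : Type*) [Field K] [NumberField K] {s a : ℝ}

lemma hasDirichletSum_subringCount_iff : HasDirichletSum (subringCount (𝓞 K)) s a ↔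
    HasSum (fun n : ℕ => (orderCount K (n + 1) : ℝ) * ((n + 1 : ℕ) : ℝ) ^ (-s)) a := by
  rw [hasDirichletSum_iff_hasSum_succ]
  rfl

lemma idealNormCount_succ (n : ℕ) : idealNormCount (𝓞 K) (n + 1) = idealCount K (n + 1) := by
  rw [idealNormCount, toArithmeticFunction_apply_of_ne_zero n.succ_ne_zero]
  refine Nat.card_congr (Equiv.subtypeEquivRight fun I => (and_iff_right_of_imp ?_).symm)
  rintro hI rfl
  rw [Ideal.absNorm_bot] at hI
  exact n.succ_ne_zero hI.symm

lemma hasDirichletSum_idealNormCount_iff : HasDirichletSum (idealNormCount (𝓞 K)) s a ↔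
    HasSum (fun n : ℕ => (idealCount K (n + 1) : ℝ) * ((n + 1 : ℕ) : ℝ) ^ (-s)) a := by
  simp only [hasDirichletSum_iff_hasSum_succ, idealNormCount_succ]

end NumberField

/-- **The order zeta function of a cubic number field** (Datskovsky–Wright): for a number
field `K` of degree `3` and real `s > 1`,
`η_K(s) · ζ_K(2s) = ζ_K(s) · ζ(2s) · ζ(3s-1)` as convergent series, i.e.
`η_K(s) = (ζ_K(s)/ζ_K(2s)) ζ(2s) ζ(3s-1)`. -/
theorem order_zeta_cubic_field
    (K : Type) [Field K] [NumberField K] (hdeg : Module.finrank ℚ K = 3)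
    (s : ℝ) (hs : 1 < s) :
    (Summable fun n : ℕ => (orderCount K (n + 1) : ℝ) * ((n + 1 : ℕ) : ℝ) ^ (-s)) ∧
    (Summable fun n : ℕ => (idealCount K (n + 1) : ℝ) * ((n + 1 : ℕ) : ℝ) ^ (-(2 * s))) ∧
    (Summable fun n : ℕ => (idealCount K (n + 1) : ℝ) * ((n + 1 : ℕ) : ℝ) ^ (-s)) ∧
    (Summable fun n : ℕ => ((n + 1 : ℕ) : ℝ) ^ (-(2 * s))) ∧
    (Summable fun n : ℕ => ((n + 1 : ℕ) : ℝ) ^ (1 - 3 * s)) ∧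
    (∑' n : ℕ, (orderCount K (n + 1) : ℝ) * ((n + 1 : ℕ) : ℝ) ^ (-s)) *
        (∑' n : ℕ, (idealCount K (n + 1) : ℝ) * ((n + 1 : ℕ) : ℝ) ^ (-(2 * s)))
      = (∑' n : ℕ, (idealCount K (n + 1) : ℝ) * ((n + 1 : ℕ) : ℝ) ^ (-s)) *
          (∑' n : ℕ, ((n + 1 : ℕ) : ℝ) ^ (-(2 * s))) *
          (∑' n : ℕ, ((n + 1 : ℕ) : ℝ) ^ (1 - 3 * s)) := by
  have hA : Module.finrank ℤ (𝓞 K) = 3 := (NumberField.RingOfIntegers.rank K).trans hdeg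
  obtain ⟨j, hj⟩ := exists_hasDirichletSum_idealNormCount K hs
  obtain ⟨j₂, hj₂⟩ := exists_hasDirichletSum_idealNormCount K (s := 2 * s) (by linarith)
  obtain ⟨z, hz⟩ := exists_hasDirichletSum_zeta (s := 2 * s) (by linarith)
  obtain ⟨w, hw⟩ := exists_hasDirichletSum_id (s := 3 * s) (by linarith)
  obtain ⟨b, hb, hbj⟩ : ∃ b, HasDirichletSum (subringCount (𝓞 K)) s b ∧ b * j₂ = j * z * w :=
    exists_hasDirichletSum_subringCount_mul_eq hA hj hj₂ hz hw
  rw [hasDirichletSum_subringCount_iff] at hb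
  rw [hasDirichletSum_idealNormCount_iff] at hj hj₂
  rw [hasDirichletSum_zeta_iff] at hz
  rw [hasDirichletSum_id_iff] at hw
  refine ⟨hb.summable, hj₂.summable, hj.summable, hz.summable, hw.summable, ?_⟩
  rw [hb.tsum_eq, hj₂.tsum_eq, hj.tsum_eq, hz.tsum_eq, hw.tsum_eq, hbj]
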